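/- arXiv:2311.10183 — 5 statements merged into one kernel-verified Lean document; each statement's English description precedes it below -/
import Mathlib

section
/- Let S be a positive signature. The reflexive-transitive closure ≼ of the easterly wind relation ⇀ on reduced S-forests is a partial order; in particular, ≼ is antisymmetric. -/
open scoped BigOperators

/-- An `S`-term over a signature given by a type `S` of generators with arity map `ar`. -/
inductive STerm (S : Type) (ar : S → ℕ) : Type
  | leaf : STerm S ar
  | node (g : S) (c : Fin (ar g) → STerm S ar) : STerm S ar

namespace STerm

variable {S : Type} {ar : S → ℕ}

/-- The arity of a term: its number of leaves. -/
def arity : STerm S ar → ℕ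
  | leaf => 1
  | node _ c => ∑ i, (c i).arity

/-- The degree of a term: its number of internal nodes. -/
def degree : STerm S ar → ℕ
  | leaf => 0
  | node _ c => 1 + ∑ i, (c i).degree

/-- The word of decorations of internal nodes along left-to-right preorder traversal. -/
def decs : STerm S ar → List S
  | leaf => []
  | node g c => g :: (List.ofFn fun i => (c i).decs).flatten

/-- Grafting `t⟨l⟩`: the `i`-th leaf (left-to-right) is replaced by the `i`-th entry of `l`. -/
def graftList : STerm S ar → List (STerm S ar) → STerm S ar
  | leaf, l => l.headD leaf
  | node g c, l =>
      node g fun i =>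
        (c i).graftList
          ((l.drop (∑ j : Fin (ar g), if (j : ℕ) < (i : ℕ) then (c j).arity else 0)).take
            (c i).arity)

/-- Grafting a term at the rightmost leaf. -/
def graftRight : STerm S ar → STerm S ar → STerm S ar
  | leaf, s => s
  | node g c, s => node g fun i => if (i : ℕ) = ar g - 1 then (c i).graftRight s else c i

/-- Grafting a term at the leftmost (first) leaf, i.e. `∘₁`. -/
def graftFirst : STerm S ar → STerm S ar → STerm S ar
  | leaf, s => s
  | node g c, s => node g fun i => if (i : ℕ) = 0 then (c i).graftFirst s else c i

/-- Preorder traversal word: `none` for leaves, `some g` for an internal node decorated by `g`. -/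
def preo : STerm S ar → List (Option S)
  | leaf => [none]
  | node g c => some g :: (List.ofFn fun i => (c i).preo).flatten

/-- The number of extremal leaves of a term: leaves which come after every internal
node in the preorder traversal. -/
def extremalCount (t : STerm S ar) : ℕ :=
  (t.preo.reverse.takeWhile fun o => o.isNone).length

/-- The list of edges `(i, j, i')` (`i'` is the `j`-th child of `i`, `j` being 1-based) between
internal nodes, internal nodes being numbered from `0` in preorder. -/
def edges : STerm S ar → List (ℕ × ℕ × ℕ)
  | leaf => []
  | node g c =>
      (List.ofFn fun i : Fin (ar g) =>
        (match c i with
          | leaf => ([] : List (ℕ × ℕ × ℕ))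
          | node _ _ =>
            [(0, (i : ℕ) + 1,
               1 + ∑ j : Fin (ar g), if (j : ℕ) < (i : ℕ) then (c j).degree else 0)]) ++
          (c i).edges.map fun e =>
            (e.1 + (1 + ∑ j : Fin (ar g), if (j : ℕ) < (i : ℕ) then (c j).degree else 0), e.2.1,
              e.2.2 + (1 + ∑ j : Fin (ar g), if (j : ℕ) < (i : ℕ) then (c j).degree else 0))).flatten

/-- The easterly wind move inside a term: a subterm rooted at an internal node which has an
immediate left sibling is detached (replaced by a leaf) and grafted onto the rightmost leaf of
the subtree rooted at this left sibling. -/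
inductive TermMove : STerm S ar → STerm S ar → Prop
  | here (g : S) (c : Fin (ar g) → STerm S ar) (j j' : Fin (ar g))
      (hj : (j' : ℕ) = (j : ℕ) + 1) (hne : c j' ≠ leaf) :
      TermMove (node g c)
        (node g (Function.update (Function.update c j ((c j).graftRight (c j'))) j' leaf))
  | child (g : S) (c : Fin (ar g) → STerm S ar) (i : Fin (ar g)) (t' : STerm S ar) :
      TermMove (c i) t' → TermMove (node g c) (node g (Function.update c i t'))

end STerm
section Forest

variable {S : Type} {ar : S → ℕ}

/-- A forest is reduced when none of its trees is a leaf. -/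
def IsReducedF (f : List (STerm S ar)) : Prop := ∀ t ∈ f, t ≠ STerm.leaf

/-- The easterly wind move on forests: either the root of a tree having an immediate left
sibling tree is detached and grafted onto the rightmost leaf of this left sibling, or a move
happens inside one of the trees. -/
inductive ForestMove : List (STerm S ar) → List (STerm S ar) → Prop
  | root (pre : List (STerm S ar)) (t t' : STerm S ar) (post : List (STerm S ar)) :
      t' ≠ STerm.leaf → ForestMove (pre ++ t :: t' :: post) (pre ++ t.graftRight t' :: post)
  | tree (pre : List (STerm S ar)) (t t' : STerm S ar) (post : List (STerm S ar)) :
      STerm.TermMove t t' → ForestMove (pre ++ t :: post) (pre ++ t' :: post)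

/-- The relation `≼`: reflexive and transitive closure of the easterly wind move. -/
def EWLe (f f' : List (STerm S ar)) : Prop := Relation.ReflTransGen ForestMove f f'

/-- Decoration word of a forest. -/
def forestDecs (f : List (STerm S ar)) : List S := (f.map STerm.decs).flatten

/-- Degree (number of internal nodes) of a forest. -/
def forestDeg (f : List (STerm S ar)) : ℕ := (f.map STerm.degree).sum

/-- Preorder indices (from 0) of the roots of the trees of a forest. -/
def rootIdxs : List (STerm S ar) → List ℕ
  | [] => []
  | t :: r => 0 :: (rootIdxs r).map (· + t.degree)

/-- Edges between internal nodes of a forest, numbered in preorder from 0. -/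
def forestEdges : List (STerm S ar) → List (ℕ × ℕ × ℕ)
  | [] => []
  | t :: r => t.edges ++ (forestEdges r).map fun e => (e.1 + t.degree, e.2.1, e.2.2 + t.degree)

/-- Grafting the terms of `l` onto the successive extremal leaves of `t`. -/
def underSub (t : STerm S ar) (l : List (STerm S ar)) : STerm S ar :=
  t.graftList (List.ofFn (n := t.arity) fun p =>
    if (p : ℕ) < t.arity - t.extremalCount then STerm.leaf
    else l.getD ((p : ℕ) - (t.arity - t.extremalCount)) STerm.leaf)

/-- The under product `f' △ f''` of two forests. -/
def underP (f' f'' : List (STerm S ar)) : List (STerm S ar) :=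
  match f'.getLast? with
  | none => f''
  | some t => f'.dropLast ++ underSub t (f''.take t.extremalCount) :: f''.drop t.extremalCount

/-- The term `ι g` of degree 1 whose root is decorated by `g`. -/
def iotaT (g : S) : STerm S ar := STerm.node g fun _ => STerm.leaf

/-- The minimal forest of the interval `W(w)`. -/
def fmin (w : List S) : List (STerm S ar) := w.map iotaT

/-- The maximal forest of the interval `W(w)`: `ι g₁ ∘₁ ι g₂ ∘₁ ⋯ ∘₁ ι g_ℓ`. -/
def fmax : List S → List (STerm S ar)
  | [] => []
  | g :: gs => [(gs.map iotaT).foldl STerm.graftFirst (iotaT g)]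

end Forest
section Alphabet

variable {S : Type} {ar : S → ℕ}

/-- An `S`-forest-like alphabet: a type endowed with a root relation, decoration relations,
and edge relations. -/
structure ForestAlphabet (S : Type) (A : Type) where
  Root : A → Prop
  Dec : S → A → Prop
  Edge : ℕ → A → A → Prop

/-- `f`-compatibility `w ⊩^A f` of a word `w` over a forest-like alphabet. -/
def ForestAlphabet.Compat {A : Type} (Al : ForestAlphabet S A) (w : List A)
    (f : List (STerm S ar)) : Prop :=
  w.length = forestDeg f ∧
  (∀ (i : ℕ) (hi : i < w.length), i ∈ rootIdxs f → Al.Root (w.get ⟨i, hi⟩)) ∧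
  (∀ (i : ℕ) (hi : i < w.length) (hd : i < (forestDecs f).length),
      Al.Dec ((forestDecs f).get ⟨i, hd⟩) (w.get ⟨i, hi⟩)) ∧
  (∀ p j q, (p, j, q) ∈ forestEdges f → ∀ (hp : p < w.length) (hq : q < w.length),
      Al.Edge j (w.get ⟨p, hp⟩) (w.get ⟨q, hq⟩))

/-- The disjoint sum of two forest-like alphabets. -/
def ForestAlphabet.dsum {A B : Type} (Al : ForestAlphabet S A) (Bl : ForestAlphabet S B) :
    ForestAlphabet S (A ⊕ B) where
  Root := Sum.elim Al.Root Bl.Root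
  Dec g := Sum.elim (Al.Dec g) (Bl.Dec g)
  Edge j x y :=
    match x, y with
    | Sum.inl a, Sum.inl a' => Al.Edge j a a'
    | Sum.inr b, Sum.inr b' => Bl.Edge j b b'
    | Sum.inl _, Sum.inr b => Bl.Root b
    | Sum.inr _, Sum.inl _ => False

/-- The alphabet `𝔸_S` with letters `a_{g,u}`, `g ∈ S`, `u ∈ ℕ*`. -/
def ASAlphabet (S : Type) : ForestAlphabet S (S × List ℕ) where
  Root a := ∃ ℓ, a.2 = List.replicate ℓ 0
  Dec g a := a.1 = g
  Edge j a a' := ∃ ℓ, a'.2 = a.2 ++ j :: List.replicate ℓ 0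

/-- The alphabet `A_ℕ` with letters `a_i`, `i ∈ ℕ`, where every letter is a root, every letter
has every decoration, and `a_i →_j a_{i'}` iff `i < i'`. -/
def ANAlphabet (S : Type) : ForestAlphabet S ℕ where
  Root _ := True
  Dec _ _ := True
  Edge _ i i' := i < i'

/-- The packing of a word of natural numbers. -/
def pck (w : List ℕ) : List ℕ :=
  w.map fun m => ((w.filter (· ≤ m)).dedup).length

end Alphabet
section Algebra

open scoped TensorProduct

variable {S : Type} {ar : S → ℕ}

/-- Reduced `S`-terms. -/
abbrev RTerm (S : Type) (ar : S → ℕ) := {t : STerm S ar // t ≠ STerm.leaf}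

/-- The map `rd` keeping the non-leaf entries of a sequence of terms. -/
def rdF : List (STerm S ar) → List (RTerm S ar)
  | [] => []
  | STerm.leaf :: r => rdF r
  | STerm.node g c :: r => ⟨STerm.node g c, fun h => nomatch h⟩ :: rdF r

/-- The natural Hopf algebra `N(S)` as a module: the monoid algebra of the free monoid on the
set of reduced `S`-terms. -/
abbrev NAlg (𝕂 : Type) [CommSemiring 𝕂] (S : Type) (ar : S → ℕ) :=
  MonoidAlgebra 𝕂 (FreeMonoid (RTerm S ar))

/-- The basis element `E_f` of `N(S)` indexed by a reduced forest `f`. -/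
noncomputable def EBasis (𝕂 : Type) [CommSemiring 𝕂] {S : Type} {ar : S → ℕ}
    (f : List (RTerm S ar)) : NAlg 𝕂 S ar :=
  MonoidAlgebra.of 𝕂 (FreeMonoid (RTerm S ar)) (FreeMonoid.ofList f)

/-- The coproduct `Δ` of `N(S)`, defined linearly on the basis by
`Δ E_f = Σ E_{rd(s₁…s_k)} ⊗ E_{rd(u₁…u_k)}`, the sum ranging over all factorizations
`t_m = s_m⟨ū_m⟩` of the entries of `f`. -/
noncomputable def DeltaN (𝕂 : Type) [CommSemiring 𝕂] (S : Type) (ar : S → ℕ) :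
    NAlg 𝕂 S ar →ₗ[𝕂] (NAlg 𝕂 S ar) ⊗[𝕂] (NAlg 𝕂 S ar) :=
  (Finsupp.lift ((NAlg 𝕂 S ar) ⊗[𝕂] (NAlg 𝕂 S ar)) 𝕂 (FreeMonoid (RTerm S ar)) fun m =>
    ∑ᶠ c ∈ {c : List (STerm S ar × List (STerm S ar)) |
        List.Forall₂ (fun p t => p.2.length = p.1.arity ∧ p.1.graftList p.2 = t.val) c
          (FreeMonoid.toList m)},
      (EBasis 𝕂 (rdF (c.map Prod.fst))) ⊗ₜ[𝕂] (EBasis 𝕂 (rdF (c.flatMap Prod.snd)))) ∘ₗ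
    (MonoidAlgebra.coeffLinearEquiv 𝕂).toLinearMap

end Algebra

/-!
Order terms strictly by declaring a leaf smaller than every reduced term and comparing two terms
with the same root decoration at the first child where they differ. An easterly wind move leaves
everything to the left of the receiving sibling unchanged, and turns the rightmost leaf of that
sibling into an internal node. Hence it increases the term where it takes place, and it increases
a forest lexicographically. A relation contained in a strict order has an antisymmetric
reflexive-transitive closure.
-/

instance isStrictOrder_listLex {α : Type*} (r : α → α → Prop) [IsStrictOrder α r] :
    IsStrictOrder (List α) (List.Lex r) where
  irrefl := List.lex_irrefl irrefl
  trans _ _ _ := List.lex_trans _root_.trans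

theorem antisymm_reflTransGen_of_le_isStrictOrder {α : Type*} {r lt : α → α → Prop}
    [IsStrictOrder α lt] (hr : r ≤ lt) : Std.Antisymm (Relation.ReflTransGen r) where
  antisymm a b hab hba := by
    rcases Relation.reflTransGen_iff_eq_or_transGen.mp hab with rfl | hlt
    · rfl
    · exact absurd (Relation.transGen_minimal hr _ _ (hlt.trans_left hba)) (irrefl a)

/-- The lexicographic strict order on terms: a leaf is smaller than any reduced term, and terms with
the same root decoration are compared at their first differing child. Reduced terms with different
root decorations are incomparable, as easterly wind moves preserve decorations. Over a positive
signature every such move is an increase. -/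
inductive STerm.LexLT {S : Type} {ar : S → ℕ} : STerm S ar → STerm S ar → Prop
  | leaf_node (g : S) (c : Fin (ar g) → STerm S ar) : LexLT leaf (node g c)
  | node_node (g : S) (c d : Fin (ar g) → STerm S ar) (i : Fin (ar g)) :
      (∀ k < i, c k = d k) → LexLT (c i) (d i) → LexLT (node g c) (node g d)

namespace STerm.LexLT

variable {S : Type} {ar : S → ℕ}

theorem ne {s t : STerm S ar} (h : LexLT s t) : s ≠ t := by
  induction h with
  | leaf_node g c => nofun
  | node_node g c d i _ _ ih =>
    rintro ⟨⟩
    exact ih rfl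

theorem trans {s t u : STerm S ar} (hst : LexLT s t) (htu : LexLT t u) : LexLT s u := by
  induction hst generalizing u with
  | leaf_node g c =>
    cases htu with
    | node_node _ _ e => exact leaf_node g e
  | node_node g c d i hcd hi ih =>
    cases htu with
    | node_node _ _ e j hde hj =>
      rcases lt_trichotomy i j with hij | rfl | hji
      · exact node_node g c e i (fun k hk => (hcd k hk).trans (hde k (hk.trans hij)))
          (hde i hij ▸ hi)
      · exact node_node g c e i (fun k hk => (hcd k hk).trans (hde k hk)) (ih hj)
      · exact node_node g c e j (fun k hk => (hcd k (hk.trans hji)).trans (hde k hk))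
          (hcd j hji ▸ hj)

instance : IsStrictOrder (STerm S ar) LexLT where
  irrefl _ h := h.ne rfl
  trans _ _ _ := trans

end STerm.LexLT

namespace STerm

variable {S : Type} {ar : S → ℕ}

theorem lexLT_graftRight (hpos : ∀ g : S, 0 < ar g) (t : STerm S ar) {s : STerm S ar}
    (hs : s ≠ leaf) : LexLT t (t.graftRight s) := by
  induction t with
  | leaf =>
    cases s with
    | leaf => exact absurd rfl hs
    | node g c => exact .leaf_node g c
  | node g c ih =>
    let last : Fin (ar g) := ⟨ar g - 1, Nat.sub_one_lt (hpos g).ne'⟩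
    refine .node_node g _ _ last (fun k hk => ?_) ?_
    · exact (if_neg (Fin.lt_def.mp hk).ne).symm
    · simpa only [last, if_true] using ih last

theorem TermMove.lexLT (hpos : ∀ g : S, 0 < ar g) {t t' : STerm S ar} (h : TermMove t t') :
    LexLT t t' := by
  induction h with
  | here g c j j' hj hne =>
    have hjj' : j < j' := Fin.lt_def.mpr (by omega)
    refine .node_node g _ _ j (fun k hk => ?_) ?_
    · rw [Function.update_of_ne (hk.trans hjj').ne, Function.update_of_ne hk.ne]
    · rw [Function.update_of_ne hjj'.ne, Function.update_self]
      exact lexLT_graftRight hpos (c j) hne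
  | child g c i t' _ ih =>
    refine .node_node g _ _ i (fun k hk => (Function.update_of_ne hk.ne _ _).symm) ?_
    rwa [Function.update_self]

end STerm

theorem ForestMove.listLex_lexLT {S : Type} {ar : S → ℕ} (hpos : ∀ g : S, 0 < ar g)
    {f f' : List (STerm S ar)} (h : ForestMove f f') : List.Lex STerm.LexLT f f' := by
  cases h with
  | root pre t t' post hne => exact .append_left _ (.rel (t.lexLT_graftRight hpos hne)) pre
  | tree pre t t' post hmove => exact .append_left _ (.rel (hmove.lexLT hpos)) pre

theorem easterly_wind_partialOrder_general {S : Type} {ar : S → ℕ} (hpos : ∀ g : S, 0 < ar g) :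
    IsPartialOrder (List (STerm S ar)) EWLe where
  refl _ := Relation.ReflTransGen.refl
  trans _ _ _ := Relation.ReflTransGen.trans
  antisymm := (antisymm_reflTransGen_of_le_isStrictOrder
    fun _ _ (h : ForestMove _ _) => h.listLex_lexLT hpos).antisymm

/-- for a positive signature, the reflexive-transitive closure `≼` of the
easterly wind relation on reduced `S`-forests is a partial order (reflexive, transitive,
and in particular antisymmetric). -/
theorem easterly_wind_partialOrder {S : Type} {ar : S → ℕ} (hpos : ∀ g : S, 0 < ar g) :
    (∀ f : List (STerm S ar), IsReducedF f → EWLe f f) ∧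
    (∀ f g h : List (STerm S ar), IsReducedF f → IsReducedF g → IsReducedF h →
      EWLe f g → EWLe g h → EWLe f h) ∧
    (∀ f g : List (STerm S ar), IsReducedF f → IsReducedF g →
      EWLe f g → EWLe g f → f = g) := by
  have := easterly_wind_partialOrder_general hpos
  exact ⟨fun f _ => refl f, fun _ _ _ _ _ _ => _root_.trans, fun _ _ _ _ => antisymm⟩
end

section
/- Let S be a positive signature. The easterly wind relation ⇀ is the covering relation of the partial order ≼ on reduced S-forests: for reduced S-forests f and f', one has f ⇀ f' if and only if f ≼ f', f ≠ f', and there is no reduced S-forest g with f ≼ g ≼ f', g ≠ f, g ≠ f'. -/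
open scoped BigOperators

/-! Read a forest in preorder and give every internal node its *height*, the sum over the letters
preceding it of `1` for a leaf and `1 - ar g` for a node `g`. The decorations and the heights
determine the forest. By the Łukasiewicz property of terms, the roots are the nodes whose height
exceeds all previous ones, and the subterm of a non-root node `x` is the longest run of nodes from
`x` on whose height is at most that of `x`. Hence a move detaching `x` lowers by one the heights on
a block of nodes starting at `x` that is itself read off from the heights.

Suppose that detaching `x` in `f` gives `f'`, that detaching `y` gives `g`, and that `g ≼ f'`. As
heights only decrease, `y` lies in the block of `x`. If `y ≠ x`, then some later move between `g`
and `f'` has to lower `x`; squeezing heights between those of `f'` and `g`, this move detaches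
`x` itself and its block still contains `y`, so that `y` is lowered twice, once too often. -/

theorem rel_iff_covers_reflTransGen {α : Type*} {r : α → α → Prop}
    (acyclic : ∀ a b, r a b → ¬ Relation.ReflTransGen r b a)
    (rigid : ∀ a b c, r a b → r a c → Relation.ReflTransGen r c b → c = b) (a b : α) :
    r a b ↔ Relation.ReflTransGen r a b ∧ a ≠ b ∧
      ¬ ∃ c, Relation.ReflTransGen r a c ∧ Relation.ReflTransGen r c b ∧ c ≠ a ∧ c ≠ b := by
  constructor
  · intro hab
    refine ⟨.single hab, fun h => acyclic a b hab (h ▸ .refl), ?_⟩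
    rintro ⟨c, hac, hcb, hca, hcb'⟩
    obtain rfl | ⟨d, had, hdc⟩ := hac.cases_head
    · exact hca rfl
    obtain rfl := rigid a b d hab had (hdc.trans hcb)
    obtain rfl | ⟨e, hde, hec⟩ := hdc.cases_head
    · exact hcb' rfl
    · exact acyclic d e hde (hec.trans hcb)
  · rintro ⟨hab, hne, hcov⟩
    obtain rfl | ⟨c, hac, hcb⟩ := hab.cases_head
    · exact absurd rfl hne
    obtain rfl : c = b := by
      by_contra hc
      exact hcov ⟨c, .single hac, hcb, fun h => acyclic a c hac (h ▸ .refl), hc⟩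
    exact hac

section Gust

variable {a b : ℕ → ℤ} {x y k : ℕ}

/-- `x` is a strict left-to-right maximum of `a`. In the height sequence of a forest these are the
roots of the trees. -/
def IsRecord (a : ℕ → ℤ) (x : ℕ) : Prop := ∀ k < x, a k < a x

/-- The positions affected by a move at `x`: all those from `x` on if `x` is a record, and otherwise
the longest run from `x` on where `a` does not exceed `a x`. -/
def gustBlock (a : ℕ → ℤ) (x : ℕ) : Set ℕ :=
  {k | x ≤ k ∧ (IsRecord a x ∨ ∀ i ∈ Set.Icc x k, a i ≤ a x)}

/-- The effect on heights of the easterly wind move detaching the node at position `x`. -/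
noncomputable def gust (a : ℕ → ℤ) (x : ℕ) : ℕ → ℤ := a - (gustBlock a x).indicator 1

/-- The relation between sequences of a single gust at some position. -/
def GustStep (a b : ℕ → ℤ) : Prop := ∃ x, gust a x = b

theorem self_mem_gustBlock (a : ℕ → ℤ) (x : ℕ) : x ∈ gustBlock a x :=
  ⟨le_rfl, .inr fun _ hi => (congrArg a (le_antisymm hi.2 hi.1)).le⟩

theorem gust_of_mem (h : k ∈ gustBlock a x) : gust a x k = a k - 1 := by
  simp [gust, h]

theorem gust_of_notMem (h : k ∉ gustBlock a x) : gust a x k = a k := by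
  simp [gust, h]

theorem gust_of_lt (h : k < x) : gust a x k = a k :=
  gust_of_notMem fun hk => hk.1.not_gt h

theorem mem_gustBlock_of_gust_lt (h : gust a x k < a k) : k ∈ gustBlock a x := by
  by_contra hk
  exact h.ne (gust_of_notMem hk)

theorem gust_le (a : ℕ → ℤ) (x : ℕ) : gust a x ≤ a :=
  sub_le_self a (Set.indicator_nonneg fun _ _ => zero_le_one)

theorem GustStep.lt (h : GustStep a b) : b < a := by
  obtain ⟨x, rfl⟩ := h
  refine (gust_le a x).lt_of_ne fun h => ?_
  have := congrFun h x
  rw [gust_of_mem (self_mem_gustBlock a x)] at this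
  lia

theorem le_of_reflTransGen_gustStep (h : Relation.ReflTransGen GustStep a b) : b ≤ a := by
  induction h with
  | refl => exact le_rfl
  | tail _ h ih => exact h.lt.le.trans ih

theorem gustBlock_subset_of_le (hle : b ≤ a) (heq : ∀ k ≤ x, b k = a k) :
    gustBlock a x ⊆ gustBlock b x := by
  rintro k ⟨hxk, hrec | hrun⟩
  · exact ⟨hxk, .inl fun i hi => by simpa only [heq i hi.le, heq x le_rfl] using hrec i hi⟩
  · exact ⟨hxk, .inr fun i hi => (hle i).trans <| (hrun i hi).trans (heq x le_rfl).ge⟩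

/-- The first gust that lowers `x` on the way from `c` to `gust a x` is a gust at `x`, and it
lowers `y` as well. -/
theorem lt_of_reflTransGen_gustStep {c : ℕ → ℤ} (hc : Relation.ReflTransGen GustStep c (gust a x))
    (hca : c ≤ a) (hcx : c x = a x) (hy : y ∈ gustBlock a x) : gust a x y < c y := by
  induction hc using Relation.ReflTransGen.head_induction_on with
  | refl => exact absurd hcx (by rw [gust_of_mem (self_mem_gustBlock a x)]; lia)
  | @head c d hcd hd ih =>
    have hle : gust a x ≤ d := le_of_reflTransGen_gustStep hd
    obtain ⟨z, rfl⟩ := hcd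
    by_cases hx : x ∈ gustBlock c z
    · have hzx : z = x := by
        refine hx.1.eq_of_not_lt fun hlt => ?_
        have hz := hle z
        rw [gust_of_lt hlt, gust_of_mem (self_mem_gustBlock c z)] at hz
        have := hca z
        lia
      subst hzx
      have heq : ∀ k ≤ z, c k = a k := fun k hk => by
        obtain rfl | hlt := hk.eq_or_lt
        · exact hcx
        · exact le_antisymm (hca k) <| by
            simpa only [gust_of_lt hlt] using hle k
      have := hle y
      rw [gust_of_mem (gustBlock_subset_of_le hca heq hy)] at this
      lia
    · exact (ih ((gust_le c z).trans hca) ((gust_of_notMem hx).trans hcx)).trans_le (gust_le c z y)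

theorem eq_of_reflTransGen_gustStep_gust
    (h : Relation.ReflTransGen GustStep (gust a y) (gust a x)) : y = x := by
  have hyy : gust a y y = a y - 1 := gust_of_mem (self_mem_gustBlock a y)
  have hle : gust a x y ≤ gust a y y := le_of_reflTransGen_gustStep h y
  have hy : y ∈ gustBlock a x := mem_gustBlock_of_gust_lt (by lia)
  refine (hy.1.eq_of_not_lt fun hxy => ?_).symm
  have hlt := lt_of_reflTransGen_gustStep h (gust_le a y) (gust_of_lt hxy) hy
  rw [gust_of_mem hy, hyy] at hlt
  exact hlt.false

end Gust

section Height

variable {S : Type*} (ar : S → ℕ)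

/-- The Łukasiewicz weight of a preorder word: the number of trees it encodes, when it is the word
of a forest. -/
def wordWeight (w : List (Option S)) : ℤ := (w.map fun o => o.elim 1 fun g => 1 - (ar g : ℤ)).sum

/-- `height ar w k` is the weight of the prefix of `w` preceding its `k`-th node, counted from `0`.
When `w` has at most `k` nodes, it is the weight of `w`, which acts as a sentinel. -/
def height : List (Option S) → ℕ → ℤ
  | [], _ => 0
  | none :: w, k => 1 + height w k
  | some _ :: _, 0 => 0
  | some g :: w, k + 1 => 1 - ar g + height w k

variable {ar}

@[simp]
theorem wordWeight_nil : wordWeight ar [] = 0 := rfl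

@[simp]
theorem wordWeight_none_cons (w : List (Option S)) :
    wordWeight ar (none :: w) = 1 + wordWeight ar w := by
  simp [wordWeight]

@[simp]
theorem wordWeight_some_cons (g : S) (w : List (Option S)) :
    wordWeight ar (some g :: w) = 1 - ar g + wordWeight ar w := by
  simp [wordWeight]

@[simp]
theorem wordWeight_append (u v : List (Option S)) :
    wordWeight ar (u ++ v) = wordWeight ar u + wordWeight ar v := by
  simp [wordWeight]

theorem height_append_of_lt {u : List (Option S)} {k : ℕ} (hk : k < u.reduceOption.length)
    (v : List (Option S)) : height ar (u ++ v) k = height ar u k := by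
  induction u generalizing k with
  | nil => simp at hk
  | cons o u ih =>
    match o, k with
    | none, k => simp_all [height]
    | some _, 0 => rfl
    | some _, k + 1 => simp_all [height]

theorem height_append_length_add (u v : List (Option S)) (k : ℕ) :
    height ar (u ++ v) (u.reduceOption.length + k) = wordWeight ar u + height ar v k := by
  induction u with
  | nil => simp
  | cons o u ih =>
    cases o with
    | none => simp [height, ih, add_assoc]
    | some g => simp [height, ih, add_assoc, Nat.add_right_comm _ 1 k]

theorem height_zero_nonneg (w : List (Option S)) : 0 ≤ height ar w 0 := by
  induction w with
  | nil => rfl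
  | cons o w ih =>
    cases o with
    | none => simp only [height]; lia
    | some g => rfl

theorem eq_of_reduceOption_eq_of_height_eq {u v : List (Option S)}
    (hdec : u.reduceOption = v.reduceOption) (hh : height ar u = height ar v) : u = v := by
  induction u generalizing v with
  | nil =>
    match v with
    | [] => rfl
    | none :: v =>
      have h0 := congrFun hh 0
      have := height_zero_nonneg (ar := ar) v
      simp only [height] at h0
      lia
    | some g :: v => simp at hdec
  | cons o u ih =>
    have h0 := congrFun hh 0
    have hu := height_zero_nonneg (ar := ar) u
    match o, v with
    | none, [] => simp only [height] at h0; lia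
    | none, none :: v =>
      rw [ih (by simpa using hdec) (funext fun k => add_left_cancel (congrFun hh k))]
    | none, some g :: v => simp only [height] at h0; lia
    | some g, [] => simp at hdec
    | some g, none :: v =>
      have := height_zero_nonneg (ar := ar) v
      simp only [height] at h0
      lia
    | some g, some g' :: v =>
      simp only [List.reduceOption_cons_of_some, List.cons.injEq] at hdec
      obtain ⟨rfl, hdec⟩ := hdec
      rw [ih hdec (funext fun k => add_left_cancel (congrFun hh (k + 1)))]

theorem gust_height_of_isRecord {u v : List (Option S)}
    (h : IsRecord (height ar (u ++ none :: v)) u.reduceOption.length) :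
    gust (height ar (u ++ none :: v)) u.reduceOption.length = height ar (u ++ v) := by
  funext k
  obtain hk | ⟨k, rfl⟩ := (lt_or_ge k u.reduceOption.length).imp_right Nat.exists_eq_add_of_le
  · rw [gust_of_lt hk, height_append_of_lt hk, height_append_of_lt hk]
  · rw [gust_of_mem ⟨Nat.le_add_right _ _, .inl h⟩, height_append_length_add,
      height_append_length_add, height]
    ring

end Height

section OfFnUpdate

variable {α : Type*} {n : ℕ}

theorem ofFn_update (c : Fin n → α) (i : Fin n) (x : α) :
    List.ofFn (Function.update c i x) = (List.ofFn c).set i x := by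
  refine List.ext_getElem (by simp) fun k _ _ => ?_
  simp [List.getElem_set, Function.update_apply, Fin.ext_iff, eq_comm]

theorem exists_ofFn_update_eq (c : Fin n → α) (i : Fin n) :
    ∃ L R : List α, L.length = i ∧ i + 1 + R.length = n ∧
      ∀ x, List.ofFn (Function.update c i x) = L ++ x :: R := by
  refine ⟨(List.ofFn c).take i, (List.ofFn c).drop (i + 1), by simp, ?_, fun x => ?_⟩
  · simp [Nat.add_sub_of_le i.2]
  rw [ofFn_update, List.set_eq_take_append_cons_drop, if_pos (by simp)]

theorem exists_ofFn_update_update_eq (c : Fin n → α) {i j : Fin n} (hij : (j : ℕ) = i + 1) :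
    ∃ L R : List α,
      ∀ x y, List.ofFn (Function.update (Function.update c i x) j y) = L ++ x :: y :: R := by
  obtain ⟨L, R, hL, hlen, hi⟩ := exists_ofFn_update_eq c i
  obtain ⟨r, R, rfl⟩ := List.exists_cons_of_length_pos (l := R) (by have := j.2; lia)
  refine ⟨L, R, fun x y => ?_⟩
  rw [ofFn_update, hi, hij, ← hL]
  simp

end OfFnUpdate

namespace STerm

variable {S : Type} {ar : S → ℕ}

/-- The preorder word of a forest. -/
def forestWord (f : List (STerm S ar)) : List (Option S) := f.flatMap preo

@[simp]
theorem forestWord_nil : forestWord ([] : List (STerm S ar)) = [] := rfl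

@[simp]
theorem forestWord_cons (t : STerm S ar) (f : List (STerm S ar)) :
    forestWord (t :: f) = t.preo ++ forestWord f := rfl

@[simp]
theorem forestWord_append (f f' : List (STerm S ar)) :
    forestWord (f ++ f') = forestWord f ++ forestWord f' := List.flatMap_append

theorem preo_node (g : S) (c : Fin (ar g) → STerm S ar) :
    (node g c).preo = some g :: forestWord (List.ofFn c) := by
  simp [preo, forestWord, List.flatMap_def, Function.comp_def]

theorem exists_preo_eq_some_cons {t : STerm S ar} (ht : t ≠ leaf) :
    ∃ g w, t.preo = some g :: w := by
  cases t with
  | leaf => exact absurd rfl ht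
  | node g c => exact ⟨g, _, rfl⟩

theorem height_preo_append_zero {t : STerm S ar} (ht : t ≠ leaf) (w : List (Option S)) :
    height ar (t.preo ++ w) 0 = 0 := by
  obtain ⟨g, v, h⟩ := exists_preo_eq_some_cons ht
  simp [h, height]

@[simp]
theorem wordWeight_preo (t : STerm S ar) : wordWeight ar t.preo = 1 := by
  induction t with
  | leaf => simp [preo]
  | node g c ih =>
    have hsum : wordWeight ar (forestWord (List.ofFn c)) = ar g := by
      have : ∀ l : List (STerm S ar), (∀ t ∈ l, wordWeight ar t.preo = 1) →
          wordWeight ar (forestWord l) = l.length := by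
        intro l hl
        induction l <;> simp_all [add_comm]
      simpa using this _ (List.forall_mem_ofFn_iff.2 ih)
    simp [preo_node, hsum]

@[simp]
theorem wordWeight_forestWord (f : List (STerm S ar)) :
    wordWeight ar (forestWord f) = f.length := by
  induction f <;> simp_all [add_comm]

private theorem height_forestWord_lt_length_of_forall {f : List (STerm S ar)}
    (hf : ∀ t ∈ f, ∀ k < t.preo.reduceOption.length, height ar t.preo k ≤ 0) {k : ℕ}
    (hk : k < (forestWord f).reduceOption.length) : height ar (forestWord f) k < f.length := by
  induction f generalizing k with
  | nil => simp at hk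
  | cons t f ih =>
    obtain hkt | ⟨k, rfl⟩ :=
      (lt_or_ge k t.preo.reduceOption.length).imp_right Nat.exists_eq_add_of_le
    · have := hf t (by simp) k hkt
      rw [forestWord_cons, height_append_of_lt hkt, List.length_cons]
      lia
    · have := ih (fun s hs => hf s (by simp [hs])) (k := k)
        (by simpa [List.reduceOption_append] using hk)
      rw [forestWord_cons, height_append_length_add, wordWeight_preo, List.length_cons]
      lia

theorem height_preo_nonpos (t : STerm S ar) {k : ℕ} (hk : k < t.preo.reduceOption.length) :
    height ar t.preo k ≤ 0 := by
  induction t generalizing k with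
  | leaf => simp [preo] at hk
  | node g c ih =>
    rw [preo_node] at hk ⊢
    match k with
    | 0 => rfl
    | k + 1 =>
      have := height_forestWord_lt_length_of_forall (List.forall_mem_ofFn_iff.2 fun i _ => ih i)
        (k := k) (by simpa using hk)
      simp only [height, List.length_ofFn] at this ⊢
      lia

theorem height_forestWord_lt_length (f : List (STerm S ar)) {k : ℕ}
    (hk : k < (forestWord f).reduceOption.length) : height ar (forestWord f) k < f.length :=
  height_forestWord_lt_length_of_forall (fun t _ _ => height_preo_nonpos t) hk

private theorem eq_and_eq_of_forestWord_append_eq_of_forall {f f' : List (STerm S ar)}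
    (hf : ∀ t ∈ f, ∀ (s : STerm S ar) (u v : List (Option S)),
      t.preo ++ u = s.preo ++ v → t = s ∧ u = v)
    (hlen : f.length = f'.length) {u v : List (Option S)}
    (h : forestWord f ++ u = forestWord f' ++ v) : f = f' ∧ u = v := by
  induction f generalizing f' with
  | nil =>
    obtain rfl : f' = [] := List.eq_nil_of_length_eq_zero hlen.symm
    exact ⟨rfl, h⟩
  | cons t f ih =>
    obtain ⟨s, f', rfl⟩ := List.exists_cons_of_length_eq_add_one hlen.symm
    simp only [forestWord_cons, List.append_assoc] at h
    obtain ⟨rfl, htail⟩ := hf t (by simp) _ _ _ h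
    obtain ⟨rfl, rfl⟩ := ih (fun t ht => hf t (by simp [ht])) (by simpa using hlen) htail
    exact ⟨rfl, rfl⟩

theorem isRecord_height_root (f : List (STerm S ar)) {t : STerm S ar} (ht : t ≠ leaf)
    (w : List (Option S)) :
    IsRecord (height ar (forestWord f ++ (t.preo ++ w))) (forestWord f).reduceOption.length := by
  intro k hk
  have hroot := height_append_length_add (ar := ar) (forestWord f) (t.preo ++ w) 0
  rw [height_preo_append_zero ht, wordWeight_forestWord, add_zero, add_zero] at hroot
  rw [hroot, height_append_of_lt hk]
  exact height_forestWord_lt_length f hk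

theorem not_isRecord_height_of_pos (u w : List (Option S)) {t : STerm S ar} {k : ℕ} (hk : 0 < k)
    (hkt : k < t.preo.reduceOption.length) :
    ¬ IsRecord (height ar (u ++ (t.preo ++ w))) (u.reduceOption.length + k) := by
  intro hrec
  have ht : t ≠ leaf := by rintro rfl; simp [preo] at hkt
  have hroot := hrec (u.reduceOption.length + 0) (by lia)
  rw [height_append_length_add, height_append_length_add, height_preo_append_zero ht,
    height_append_of_lt hkt] at hroot
  have := height_preo_nonpos t hkt
  lia

theorem eq_and_eq_of_preo_append_eq {t s : STerm S ar} {u v : List (Option S)}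
    (h : t.preo ++ u = s.preo ++ v) : t = s ∧ u = v := by
  induction t generalizing s u v with
  | leaf =>
    cases s <;> simp_all [preo]
  | node g c ih =>
    cases s with
    | leaf => simp [preo] at h
    | node g' d =>
      simp only [preo_node, List.cons_append, List.cons.injEq, Option.some.injEq] at h
      obtain ⟨rfl, h⟩ := h
      obtain ⟨hcd, rfl⟩ := eq_and_eq_of_forestWord_append_eq_of_forall
        (List.forall_mem_ofFn_iff.2 fun i _ _ _ => ih i) (by simp) h
      exact ⟨by rw [List.ofFn_injective hcd], rfl⟩

theorem forestWord_injective :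
    Function.Injective (forestWord : List (STerm S ar) → List (Option S)) := by
  intro f f' h
  have hlen : (f.length : ℤ) = f'.length := by
    rw [← wordWeight_forestWord, ← wordWeight_forestWord, h]
  exact (eq_and_eq_of_forestWord_append_eq_of_forall (u := []) (v := [])
    (fun t _ _ _ _ => eq_and_eq_of_preo_append_eq) (mod_cast hlen) (by simpa using h)).1

theorem add_mem_gustBlock_height_iff {u v : List (Option S)} {t : STerm S ar} (ht : t ≠ leaf)
    (h : ¬ IsRecord (height ar (u ++ (t.preo ++ v))) u.reduceOption.length) {k : ℕ} :
    u.reduceOption.length + k ∈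
      gustBlock (height ar (u ++ (t.preo ++ v))) u.reduceOption.length ↔
        k < t.preo.reduceOption.length := by
  have hstart : height ar (u ++ (t.preo ++ v)) u.reduceOption.length = wordWeight ar u := by
    simpa [height_preo_append_zero ht] using height_append_length_add (ar := ar) u (t.preo ++ v) 0
  constructor
  · rintro ⟨-, hrec | hrun⟩
    · exact absurd hrec h
    by_contra! hk
    have hnext := hrun (u.reduceOption.length + (t.preo.reduceOption.length + 0)) ⟨by lia, by lia⟩
    rw [hstart, height_append_length_add, height_append_length_add, wordWeight_preo] at hnext
    have := height_zero_nonneg (ar := ar) v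
    lia
  · refine fun hk => ⟨Nat.le_add_right _ _, .inr fun i hi => ?_⟩
    obtain ⟨i, rfl⟩ := Nat.exists_eq_add_of_le hi.1
    have hit : i < t.preo.reduceOption.length := by have := hi.2; lia
    have := height_preo_nonpos t hit
    rw [hstart, height_append_length_add, height_append_of_lt hit]
    lia

theorem gust_height_preo {u v : List (Option S)} {t : STerm S ar} (ht : t ≠ leaf)
    (h : ¬ IsRecord (height ar (u ++ none :: (t.preo ++ v))) u.reduceOption.length) :
    gust (height ar (u ++ none :: (t.preo ++ v))) u.reduceOption.length =
      height ar (u ++ (t.preo ++ none :: v)) := by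
  have hblock (k : ℕ) := add_mem_gustBlock_height_iff (u := u ++ [none]) (v := v) (k := k) ht
    (by simpa [List.reduceOption_append] using h)
  simp only [List.reduceOption_append, List.reduceOption_singleton, Option.toList_none,
    List.append_nil, List.append_assoc, List.singleton_append] at hblock
  funext k
  obtain hk | ⟨k, rfl⟩ := (lt_or_ge k u.reduceOption.length).imp_right Nat.exists_eq_add_of_le
  · rw [gust_of_lt hk, height_append_of_lt hk, height_append_of_lt hk]
  obtain hk | ⟨k, rfl⟩ := (lt_or_ge k t.preo.reduceOption.length).imp_right Nat.exists_eq_add_of_le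
  · rw [gust_of_mem ((hblock k).2 hk), height_append_length_add, height_append_length_add, height,
      height_append_of_lt hk, height_append_of_lt hk]
    ring
  · rw [gust_of_notMem fun hmem => ((hblock _).1 hmem).not_ge (Nat.le_add_right _ _),
      height_append_length_add, height_append_length_add, height, height_append_length_add,
      height_append_length_add, height]
    ring

theorem exists_preo_eq_append_singleton (hpos : ∀ g : S, 0 < ar g) (t : STerm S ar) :
    ∃ u, t.preo = u ++ [none] ∧ ∀ s, (t.graftRight s).preo = u ++ s.preo := by
  induction t with
  | leaf => exact ⟨[], rfl, fun _ => rfl⟩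
  | node g c ih =>
    let last : Fin (ar g) := ⟨ar g - 1, Nat.sub_lt (hpos g) one_pos⟩
    obtain ⟨L, R, -, hlen, hupd⟩ := exists_ofFn_update_eq c last
    obtain rfl : R = [] := List.eq_nil_of_length_eq_zero (by simp only [last] at hlen; lia)
    obtain ⟨u, hu, hgraft⟩ := ih last
    refine ⟨some g :: (forestWord L ++ u), ?_, fun s => ?_⟩
    · rw [← Function.update_eq_self last c, preo_node, hupd]
      simp [hu]
    · have : (node g c).graftRight s =
          node g (Function.update c last ((c last).graftRight s)) := by
        simp only [graftRight, node.injEq, heq_eq_eq, true_and]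
        funext i
        by_cases hi : i = last
        · subst hi; simp [last]
        · have : (i : ℕ) ≠ ar g - 1 := fun h => hi (Fin.ext h)
          simp [hi, this]
      simp [this, preo_node, hupd, hgraft]

theorem graftRight_ne_leaf (t : STerm S ar) {s : STerm S ar} (hs : s ≠ leaf) :
    t.graftRight s ≠ leaf := by
  cases t with
  | leaf => exact hs
  | node g c => simp [graftRight]

theorem TermMove.ne_leaf {t t' : STerm S ar} (h : TermMove t t') : t' ≠ leaf := by
  cases h <;> simp

theorem TermMove.exists_preo_eq (hpos : ∀ g : S, 0 < ar g) {t t' : STerm S ar}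
    (h : TermMove t t') : ∃ (g : S) (u : List (Option S)) (s : STerm S ar) (v : List (Option S)),
      s ≠ leaf ∧ t.preo = some g :: u ++ none :: (s.preo ++ v) ∧
        t'.preo = some g :: u ++ (s.preo ++ none :: v) := by
  induction h with
  | here g c i j hij hj =>
    obtain ⟨L, R, hupd⟩ := exists_ofFn_update_update_eq c hij
    obtain ⟨u, hu, hgraft⟩ := exists_preo_eq_append_singleton hpos (c i)
    have hc : List.ofFn c = L ++ c i :: c j :: R := by simpa using hupd (c i) (c j)
    refine ⟨g, forestWord L ++ u, c j, forestWord R, hj, ?_, ?_⟩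
    · simp [preo_node, hc, hu]
    · rw [preo_node, hupd]
      simp [hgraft, preo]
  | child g c i t' _ ih =>
    obtain ⟨L, R, -, -, hupd⟩ := exists_ofFn_update_eq c i
    obtain ⟨g', u, s, v, hs, hi, ht'⟩ := ih
    have hc : List.ofFn c = L ++ c i :: R := by simpa using hupd (c i)
    refine ⟨g, forestWord L ++ some g' :: u, s, v ++ forestWord R, hs, ?_, ?_⟩
    · simp [preo_node, hc, hi]
    · simp [preo_node, hupd, ht']

end STerm

section EasterlyWind

open STerm

variable {S : Type} {ar : S → ℕ} {f f' g : List (STerm S ar)}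

theorem ForestMove.isReducedF (h : ForestMove f f') (hf : IsReducedF f) : IsReducedF f' := by
  cases h with
  | root pre t t' post ht' =>
    simp_all [IsReducedF, or_imp, forall_and, graftRight_ne_leaf]
  | tree pre t t' post ht =>
    simp_all [IsReducedF, or_imp, forall_and, ht.ne_leaf]

theorem EWLe.isReducedF (h : EWLe f f') (hf : IsReducedF f) : IsReducedF f' := by
  induction h with
  | refl => exact hf
  | tail _ h ih => exact h.isReducedF ih

theorem ForestMove.reduceOption_forestWord_eq (hpos : ∀ g : S, 0 < ar g) (h : ForestMove f f') :
    (forestWord f).reduceOption = (forestWord f').reduceOption := by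
  cases h with
  | root pre t t' post =>
    obtain ⟨u, hu, hgraft⟩ := exists_preo_eq_append_singleton hpos t
    simp [List.reduceOption_append, hu, hgraft]
  | tree pre t t' post ht =>
    obtain ⟨g, u, s, v, -, ht, ht'⟩ := ht.exists_preo_eq hpos
    simp [List.reduceOption_append, ht, ht']

theorem ForestMove.gustStep_height (hpos : ∀ g : S, 0 < ar g) (h : ForestMove f f') :
    GustStep (height ar (forestWord f)) (height ar (forestWord f')) := by
  cases h with
  | root pre t t' post ht' =>
    obtain ⟨u, hu, hgraft⟩ := exists_preo_eq_append_singleton hpos t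
    have hrec := isRecord_height_root (pre ++ [t]) ht' (forestWord post)
    refine ⟨(forestWord pre ++ u).reduceOption.length, ?_⟩
    have hgust := gust_height_of_isRecord (ar := ar) (u := forestWord pre ++ u)
      (v := t'.preo ++ forestWord post) (by simpa [hu, List.reduceOption_append] using hrec)
    simpa [hu, hgraft] using hgust
  | tree pre t t' post ht =>
    obtain ⟨g, u, s, v, hs, ht, ht'⟩ := ht.exists_preo_eq hpos
    obtain ⟨g', w, hw⟩ := exists_preo_eq_some_cons hs
    have hrec := not_isRecord_height_of_pos (forestWord pre) (forestWord post) (t := t)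
      (k := (some g :: u).reduceOption.length) (by simp)
      (by simp [ht, hw, List.reduceOption_append])
    refine ⟨(forestWord pre ++ some g :: u).reduceOption.length, ?_⟩
    have hgust := gust_height_preo (u := forestWord pre ++ some g :: u) (v := v ++ forestWord post)
      hs (by simpa [ht, List.reduceOption_append] using hrec)
    simpa [ht, ht'] using hgust

theorem EWLe.reflTransGen_gustStep_height (hpos : ∀ g : S, 0 < ar g) (h : EWLe f f') :
    Relation.ReflTransGen GustStep (height ar (forestWord f)) (height ar (forestWord f')) :=
  Relation.ReflTransGen.lift (fun f => height ar (forestWord f))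
    (fun _ _ (h : ForestMove _ _) => h.gustStep_height hpos) _ _ h

theorem ForestMove.not_ewLe (hpos : ∀ g : S, 0 < ar g) (h : ForestMove f f') : ¬ EWLe f' f :=
  fun hle => (h.gustStep_height hpos).lt.not_ge
    (le_of_reflTransGen_gustStep (hle.reflTransGen_gustStep_height hpos))

theorem ForestMove.eq_of_ewLe (hpos : ∀ g : S, 0 < ar g) (h : ForestMove f f')
    (hg : ForestMove f g) (hle : EWLe g f') : g = f' := by
  have hdec := (hg.reduceOption_forestWord_eq hpos).symm.trans (h.reduceOption_forestWord_eq hpos)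
  have hreach := hle.reflTransGen_gustStep_height hpos
  obtain ⟨x, hx⟩ := h.gustStep_height hpos
  obtain ⟨y, hy⟩ := hg.gustStep_height hpos
  obtain rfl : y = x := eq_of_reflTransGen_gustStep_gust (by rwa [hx, hy])
  exact forestWord_injective (eq_of_reduceOption_eq_of_height_eq hdec (hy.symm.trans hx))

theorem easterly_wind_covering_general (hpos : ∀ g : S, 0 < ar g) (f f' : List (STerm S ar)) :
    ForestMove f f' ↔
      EWLe f f' ∧ f ≠ f' ∧ ¬ ∃ g, EWLe f g ∧ EWLe g f' ∧ g ≠ f ∧ g ≠ f' :=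
  rel_iff_covers_reflTransGen (fun _ _ h => h.not_ewLe hpos)
    (fun _ _ _ h hg hle => h.eq_of_ewLe hpos hg hle) f f'

end EasterlyWind

/-- the easterly wind relation `⇀` is the covering relation of the partial
order `≼` on reduced `S`-forests. -/
theorem easterly_wind_covering {S : Type} {ar : S → ℕ} (hpos : ∀ g : S, 0 < ar g)
    (f f' : List (STerm S ar)) (hf : IsReducedF f) (hf' : IsReducedF f') :
    ForestMove f f' ↔
      EWLe f f' ∧ f ≠ f' ∧
        ¬ ∃ g : List (STerm S ar),
            IsReducedF g ∧ EWLe f g ∧ EWLe g f' ∧ g ≠ f ∧ g ≠ f' := by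
  rw [easterly_wind_covering_general hpos]
  have hred (g : List (STerm S ar)) (hg : EWLe f g) : IsReducedF g := hg.isReducedF hf
  grind
end

section
/- Let S be a positive signature. For any reduced S-forest f, the set {f' : f ≼ f'} of reduced S-forests greater than or equal to f is finite; in particular, every interval of the partial order ≼ is finite. -/
open scoped BigOperators

/-!
In a positive signature every internal node has a last child, so grafting `s` onto the rightmost
leaf of `t` appends the preorder word of `s` to that of `t`. An easterly wind move therefore only
merges two adjacent blocks of the preorder word of decorations, and this word is an invariant of
the order. Finitely many reduced forests have a given preorder word: removing the first letter
exposes the children of the first root and the remaining trees, whose words are strictly shorter.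
-/

section FlattenOfFn

variable {α : Type*} {n : ℕ} {u v : Fin n → List α}

theorem flatten_ofFn_append_last (hn : 0 < n) (w : List α) :
    (List.ofFn fun i : Fin n => if (i : ℕ) = n - 1 then u i ++ w else u i).flatten =
      (List.ofFn u).flatten ++ w := by
  obtain ⟨m, rfl⟩ := Nat.exists_eq_add_one.mpr hn
  have hlt (i : Fin m) : (i : ℕ) ≠ m := i.isLt.ne
  simp only [List.ofFn_succ', List.concat_eq_append, List.flatten_append, List.flatten_singleton,
    Nat.add_sub_cancel, Fin.val_castSucc, Fin.val_last, hlt, if_true, if_false, List.append_assoc]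

theorem flatten_ofFn_eq_of_merge {j j' : Fin n} (hj : (j' : ℕ) = j + 1)
    (hvj : v j = u j ++ u j') (hvj' : v j' = []) (hv : ∀ i, i ≠ j → i ≠ j' → v i = u i) :
    (List.ofFn v).flatten = (List.ofFn u).flatten := by
  induction n with
  | zero => exact j.elim0
  | succ n ih =>
    cases j' using Fin.cases with
    | zero => simp at hj
    | succ k' =>
      cases j using Fin.cases with
      | zero =>
        obtain ⟨m, rfl⟩ : ∃ m, n = m + 1 := Nat.exists_eq_add_one.mpr k'.pos
        obtain rfl : k' = 0 := Fin.ext (by simpa using hj)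
        have htail (i : Fin m) : v i.succ.succ = u i.succ.succ :=
          hv _ (Fin.succ_ne_zero _) (by simp [Fin.ext_iff])
        simp only [List.ofFn_succ, List.flatten_cons, hvj, hvj', htail, List.nil_append,
          List.append_assoc]
      | succ k =>
        have hhead : v 0 = u 0 := hv 0 (Fin.succ_ne_zero _).symm (Fin.succ_ne_zero _).symm
        have htail := ih (u := fun i => u i.succ) (v := fun i => v i.succ) (j := k) (j' := k')
          (by simpa using hj) hvj hvj' fun i hik hik' =>
            hv _ (Fin.succ_injective _ |>.ne hik) (Fin.succ_injective _ |>.ne hik')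
        simp only [List.ofFn_succ, List.flatten_cons, hhead, htail]

end FlattenOfFn

namespace STerm

variable {S : Type} {ar : S → ℕ}

theorem decs_graftRight (hpos : ∀ g : S, 0 < ar g) (t s : STerm S ar) :
    (t.graftRight s).decs = t.decs ++ s.decs := by
  induction t with
  | leaf => rfl
  | node g c ih =>
    simp only [graftRight, decs, apply_ite decs, ih, flatten_ofFn_append_last (hpos g),
      List.cons_append]

theorem TermMove.decs_eq (hpos : ∀ g : S, 0 < ar g) {t t' : STerm S ar} (h : TermMove t t') :
    t'.decs = t.decs := by
  induction h with
  | here g c j j' hj _ =>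
    have hjj' : j ≠ j' := by rintro rfl; omega
    simp only [decs]
    congr 1
    refine flatten_ofFn_eq_of_merge hj ?_ ?_ fun i hij hij' => ?_
    · simp only [Function.update_of_ne hjj', Function.update_self, decs_graftRight hpos]
    · simp only [Function.update_self, decs]
    · simp only [Function.update_of_ne hij', Function.update_of_ne hij]
  | child g c i t' _ ih =>
    have hchildren : (fun k => (Function.update c i t' k).decs) = fun k => (c k).decs := by
      funext k
      obtain rfl | hk := eq_or_ne k i
      · rw [Function.update_self, ih]
      · rw [Function.update_of_ne hk]
    simp only [decs, hchildren]

theorem decs_eq_nil_iff {t : STerm S ar} : t.decs = [] ↔ t = leaf := by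
  cases t <;> simp [decs]

theorem decs_child_sublist {g : S} (c : Fin (ar g) → STerm S ar) (i : Fin (ar g)) :
    (c i).decs.Sublist (List.ofFn fun k => (c k).decs).flatten :=
  List.sublist_flatten_of_mem (List.mem_ofFn.mpr ⟨i, rfl⟩)

theorem finite_setOf_decs_sublist (w : List S) :
    {t : STerm S ar | t.decs.Sublist w}.Finite := by
  induction w with
  | nil => simp [decs_eq_nil_iff]
  | cons a w ih =>
    have hchildren : {c : Fin (ar a) → STerm S ar | ∀ i, (c i).decs.Sublist w}.Finite :=
      Set.Finite.pi' fun _ => ih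
    refine (ih.union (hchildren.image (node a))).subset fun t ht => ?_
    rcases List.sublist_cons_iff.mp ht with hw | ⟨r, hr, hrw⟩
    · exact Or.inl hw
    · cases t with
      | leaf => cases hr
      | node g c =>
        obtain ⟨rfl, rfl⟩ := List.cons.inj hr
        exact Or.inr ⟨c, fun i => (decs_child_sublist c i).trans hrw, rfl⟩

end STerm

section Forest

variable {S : Type} {ar : S → ℕ}

theorem forestDecs_cons (t : STerm S ar) (f : List (STerm S ar)) :
    forestDecs (t :: f) = t.decs ++ forestDecs f := rfl

theorem forestDecs_append (f f' : List (STerm S ar)) :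
    forestDecs (f ++ f') = forestDecs f ++ forestDecs f' := by
  simp only [forestDecs, List.map_append, List.flatten_append]

theorem ForestMove.forestDecs_eq (hpos : ∀ g : S, 0 < ar g) {f f' : List (STerm S ar)}
    (h : ForestMove f f') : forestDecs f' = forestDecs f := by
  cases h with
  | root pre t t' post _ =>
    simp only [forestDecs_append, forestDecs_cons, STerm.decs_graftRight hpos, List.append_assoc]
  | tree pre t t' post h =>
    simp only [forestDecs_append, forestDecs_cons, h.decs_eq hpos]

theorem EWLe.forestDecs_eq (hpos : ∀ g : S, 0 < ar g) {f f' : List (STerm S ar)}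
    (h : EWLe f f') : forestDecs f' = forestDecs f := by
  induction h with
  | refl => rfl
  | tail _ hmove ih => exact (hmove.forestDecs_eq hpos).trans ih

theorem finite_setOf_isReducedF_forestDecs_sublist (w : List S) :
    {f : List (STerm S ar) | IsReducedF f ∧ (forestDecs f).Sublist w}.Finite := by
  induction w with
  | nil =>
    refine (Set.finite_singleton []).subset ?_
    rintro (_ | ⟨t, f⟩) ⟨hred, hsub⟩
    · rfl
    · have hnil := List.append_eq_nil_iff.mp (List.sublist_nil.mp hsub)
      exact absurd (STerm.decs_eq_nil_iff.mp hnil.1) (hred t List.mem_cons_self)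
  | cons a w ih =>
    refine (ih.union ((STerm.finite_setOf_decs_sublist (a :: w)).image2 List.cons ih)).subset ?_
    rintro f ⟨hred, hsub⟩
    rcases List.sublist_cons_iff.mp hsub with hw | ⟨r, hr, hrw⟩
    · exact Or.inl ⟨hred, hw⟩
    · match f with
      | [] => cases hr
      | .leaf :: _ => exact absurd rfl (hred _ List.mem_cons_self)
      | .node g c :: f =>
        obtain ⟨rfl, rfl⟩ := List.cons.inj hr
        have htree : (STerm.node g c).decs.Sublist (g :: w) :=
          ((List.sublist_append_left _ _).trans hrw).cons_cons g
        have htail : (forestDecs f).Sublist w := (List.sublist_append_right _ _).trans hrw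
        exact Or.inr ⟨_, htree, f, ⟨fun t ht => hred t (List.mem_cons_of_mem _ ht), htail⟩, rfl⟩

end Forest

/-- upper sets of the easterly wind order are finite; in particular all
intervals are finite. -/
theorem easterly_wind_upperSet_finite {S : Type} {ar : S → ℕ} (hpos : ∀ g : S, 0 < ar g) :
    (∀ f : List (STerm S ar), IsReducedF f →
      {f' : List (STerm S ar) | IsReducedF f' ∧ EWLe f f'}.Finite) ∧
    (∀ f₁ f₂ : List (STerm S ar), IsReducedF f₁ → IsReducedF f₂ →
      {g : List (STerm S ar) | IsReducedF g ∧ EWLe f₁ g ∧ EWLe g f₂}.Finite) := by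
  have upperSet_finite (f : List (STerm S ar)) : {f' | IsReducedF f' ∧ EWLe f f'}.Finite :=
    (finite_setOf_isReducedF_forestDecs_sublist (forestDecs f)).subset fun _ hf' =>
      ⟨hf'.1, hf'.2.forestDecs_eq hpos ▸ List.Sublist.refl _⟩
  exact ⟨fun f _ => upperSet_finite f, fun f₁ _ _ _ =>
    (upperSet_finite f₁).subset fun _ hg => ⟨hg.1, hg.2.1⟩⟩
end

section
/- Let S be a positive signature and w = g_1…g_ℓ ∈ S* a word on S. Then f_min(w) ≼ f_max(w), and the interval W(w) = {f : f_min(w) ≼ f ≼ f_max(w)}, ordered by ≼, is a lattice: any two elements of W(w) have a greatest lower bound and a least upper bound in W(w). -/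
open scoped BigOperators

/-!
The interval `W(w)` consists of all reduced forests with word of decorations `w`. Removing the root
of the first tree of a forest with word `g w` and forgetting the empty slots of this root leaves a
forest `F` with word `w`. The original forest is recovered from `F` and from the vector of the
positions, in preorder, at which the successive children of the removed root end. The vectors that
arise are those in which each entry is either the previous one or the next boundary between two
trees of `F`.

In these coordinates `≼` is the order of `F` together with the componentwise order of the vectors.
Indeed, any move on `F` lifts to the original forest in such a way that no end position jumps over a
boundary of the resulting forest, and moves only delete boundaries. Meets and joins follow by
induction on `w`: over the meet (resp. join) `F` of the smaller forests, take the greatest (resp.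
least) admissible vector below the componentwise minimum (resp. above the componentwise maximum).
-/

namespace EasterlyWind

section Lists

variable {α β γ : Type*}

theorem exists_ofFn_eq_append_cons {n : ℕ} (c : Fin n → α) (i : Fin n) :
    ∃ p q, (i : ℕ) = p.length ∧ List.ofFn c = p ++ c i :: q := by
  refine ⟨(List.ofFn c).take i, (List.ofFn c).drop (i + 1), by simp, ?_⟩
  conv_lhs => rw [← List.take_append_drop (i : ℕ) (List.ofFn c),
    List.drop_eq_getElem_cons (by simp)]
  simp

theorem exists_ofFn_eq_concat {n : ℕ} (c : Fin n → α) {i : Fin n} (hi : (i : ℕ) + 1 = n) :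
    ∃ p, (i : ℕ) = p.length ∧ List.ofFn c = p ++ [c i] := by
  obtain ⟨p, q, hp, h⟩ := exists_ofFn_eq_append_cons c i
  have hlen := congrArg List.length h
  simp only [List.length_ofFn, List.length_append, List.length_cons] at hlen
  obtain rfl : q = [] := List.length_eq_zero_iff.1 (by omega)
  exact ⟨p, hp, h⟩

theorem exists_eq_of_ofFn_eq_append_cons {n : ℕ} {c : Fin n → α} {p q : List α} {x : α}
    (h : List.ofFn c = p ++ x :: q) : ∃ i : Fin n, (i : ℕ) = p.length ∧ c i = x := by
  have hlen : p.length < n := by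
    have := congrArg List.length h
    simp only [List.length_ofFn, List.length_append, List.length_cons] at this
    omega
  refine ⟨⟨p.length, hlen⟩, rfl, ?_⟩
  have := congrArg (fun l => l[p.length]?) h
  simpa [hlen] using this

theorem exists_ofFn_eq_append_cons_cons {n : ℕ} (c : Fin n → α) {i j : Fin n}
    (hij : (j : ℕ) = i + 1) :
    ∃ p q, (i : ℕ) = p.length ∧ List.ofFn c = p ++ c i :: c j :: q := by
  obtain ⟨p, q, hp, h⟩ := exists_ofFn_eq_append_cons c j
  obtain rfl | ⟨p, x, rfl⟩ := p.eq_nil_or_concat'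
  · simp only [List.length_nil] at hp
    omega
  simp only [List.length_append, List.length_singleton, List.append_assoc,
    List.singleton_append] at hp h
  obtain ⟨i', hi', rfl⟩ := exists_eq_of_ofFn_eq_append_cons h
  obtain rfl : i' = i := Fin.ext (by omega)
  exact ⟨p, q, hi', h⟩

theorem ofFn_update_of_eq_append_cons {n : ℕ} {c : Fin n → α} {p q : List α} {x : α}
    (h : List.ofFn c = p ++ x :: q) {i : Fin n} (hi : (i : ℕ) = p.length) (a : α) :
    List.ofFn (Function.update c i a) = p ++ a :: q := by
  have hset : List.ofFn (Function.update c i a) = (List.ofFn c).set i a := by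
    apply List.ext_getElem <;>
      simp [List.getElem_set, Function.update_apply, Fin.ext_iff, eq_comm]
  rw [hset, h, hi]
  simp

theorem ofFn_update_update_of_eq_append_cons_cons {n : ℕ} {c : Fin n → α} {p q : List α} {x y : α}
    (h : List.ofFn c = p ++ x :: y :: q) {i j : Fin n} (hi : (i : ℕ) = p.length)
    (hij : (j : ℕ) = i + 1) (a b : α) :
    List.ofFn (Function.update (Function.update c i a) j b) = p ++ a :: b :: q := by
  have h' : List.ofFn (Function.update c i a) = (p ++ [a]) ++ y :: q := by
    simpa using ofFn_update_of_eq_append_cons h hi a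
  simpa using ofFn_update_of_eq_append_cons h' (i := j) (by simp [hij, hi]) b

theorem ofFn_ite_eq_zero {n : ℕ} (hn : 0 < n) (x y : α) :
    (List.ofFn fun i : Fin n => if (i : ℕ) = 0 then x else y) =
      x :: List.replicate (n - 1) y := by
  obtain ⟨n, rfl⟩ := Nat.exists_eq_succ_of_ne_zero hn.ne'
  simp [List.ofFn_succ]

theorem forall₂_trans {R : α → α → Prop} [IsTrans α R] {a b c : List α}
    (hab : List.Forall₂ R a b) (hbc : List.Forall₂ R b c) : List.Forall₂ R a c := by
  induction hab generalizing c with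
  | nil => exact hbc
  | cons h _ ih =>
    cases hbc with
    | cons h' hbc => exact .cons (_root_.trans h h') (ih hbc)

theorem forall₂_replicate_left {R : α → β → Prop} {n : ℕ} {x : α} {l : List β}
    (hn : l.length = n) (h : ∀ y ∈ l, R x y) : List.Forall₂ R (List.replicate n x) l := by
  rw [List.forall₂_iff_get]
  exact ⟨by simp [hn], fun i _ _ => by simpa using h _ (List.getElem_mem _)⟩

theorem forall₂_le_zipWith_inf_iff [SemilatticeInf α] {l a b : List α}
    (hab : a.length = b.length) :
    List.Forall₂ (· ≤ ·) l (List.zipWith (· ⊓ ·) a b) ↔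
      List.Forall₂ (· ≤ ·) l a ∧ List.Forall₂ (· ≤ ·) l b := by
  simp only [List.forall₂_iff_get, List.length_zipWith, List.get_eq_getElem, List.getElem_zipWith,
    le_inf_iff]
  grind

theorem forall₂_zipWith_sup_le_iff [SemilatticeSup α] {l a b : List α}
    (hab : a.length = b.length) :
    List.Forall₂ (· ≤ ·) (List.zipWith (· ⊔ ·) a b) l ↔
      List.Forall₂ (· ≤ ·) a l ∧ List.Forall₂ (· ≤ ·) b l := by
  simp only [List.forall₂_iff_get, List.length_zipWith, List.get_eq_getElem, List.getElem_zipWith,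
    sup_le_iff]
  grind

theorem isChain_zipWith {R₁ : α → α → Prop} {R₂ : β → β → Prop} {R : γ → γ → Prop} {f : α → β → γ}
    (hf : ∀ a a' b b', R₁ a a' → R₂ b b' → R (f a b) (f a' b')) {l₁ : List α} {l₂ : List β}
    (h₁ : l₁.IsChain R₁) (h₂ : l₂.IsChain R₂) : (List.zipWith f l₁ l₂).IsChain R := by
  rw [List.isChain_iff_getElem] at *
  intro i hi
  simp only [List.length_zipWith] at hi
  simpa using hf _ _ _ _ (h₁ i (by omega)) (h₂ i (by omega))

end Lists

section WeakCovers

variable {α : Type*}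

section Preorder

variable [Preorder α]

/-- `WCovByIn B a b`: the element `b` of `B` weakly covers `a` relative to `B`, that is, `b` is
either `a` or the successor of `a` in `B`. This relativizes `WCovBy` to a set, without asking that
`a` belong to it. -/
def WCovByIn (B : Set α) (a b : α) : Prop := b ∈ B ∧ a ≤ b ∧ ∀ c ∈ B, a < c → b ≤ c

theorem mem_of_isChain_wCovByIn {B : Set α} {o k : α} {l : List α}
    (hl : (o :: l).IsChain (WCovByIn B)) (hk : k ∈ l) : k ∈ B := by
  induction l generalizing o with
  | nil => simp at hk
  | cons a l ih =>
    obtain ⟨ha, hl⟩ := List.isChain_cons_cons.1 hl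
    rcases List.mem_cons.1 hk with rfl | hk
    · exact ha.1
    · exact ih hl hk

theorem isChain_wCovByIn_insert {B : Set α} {a o : α} (ha : a < o) {l : List α} :
    (o :: l).IsChain (WCovByIn (insert a B)) ↔ (o :: l).IsChain (WCovByIn B) := by
  induction l generalizing o with
  | nil => simp
  | cons k l ih =>
    have hk : WCovByIn (insert a B) o k ↔ WCovByIn B o k := by
      simp only [WCovByIn, Set.mem_insert_iff]
      grind
    rw [List.isChain_cons_cons, List.isChain_cons_cons, hk]
    exact and_congr_right fun h => ih (ha.trans_le h.2.1)

end Preorder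

variable [LinearOrder α]

theorem exists_wCovByIn_gt [WellFoundedLT α] {B : Set α} {o m : α} (hm : m ∈ B) (hom : o < m) :
    ∃ k, o < k ∧ WCovByIn B o k := by
  obtain ⟨k, ⟨hkB, hok⟩, hk⟩ :=
    wellFounded_lt.has_min {b | b ∈ B ∧ o < b} ⟨m, hm, hom⟩
  exact ⟨k, hok, hkB, hok.le, fun c hc hoc => not_lt.1 (hk c ⟨hc, hoc⟩)⟩

theorem exists_greatest_isChain_wCovByIn [WellFoundedLT α] {B : Set α} {o : α} {m : List α}
    (ho : o ∈ B) (hm : (o :: m).IsChain fun a b => b ∈ B ∧ a ≤ b) :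
    ∃ l : List α, (o :: l).IsChain (WCovByIn B) ∧ List.Forall₂ (· ≤ ·) l m ∧
      ∀ {G : Set α} {o' : α} {l' : List α}, B ⊆ G → o' ≤ o → (o' :: l').IsChain (WCovByIn G) →
        List.Forall₂ (· ≤ ·) l' m → List.Forall₂ (· ≤ ·) l' l := by
  induction m generalizing o with
  | nil => exact ⟨[], .singleton _, .nil, fun _ _ _ h => h⟩
  | cons x m ih =>
    obtain ⟨⟨hxB, hox⟩, hm⟩ := List.isChain_cons_cons.1 hm
    obtain ⟨k, hk, hkx, hk_greatest⟩ : ∃ k, WCovByIn B o k ∧ k ≤ x ∧ (k = x ∨ o < k) := by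
      rcases hox.eq_or_lt with rfl | hox
      · exact ⟨o, ⟨ho, le_rfl, fun _ _ h => h.le⟩, le_rfl, .inl rfl⟩
      · obtain ⟨k, hok, hk⟩ := exists_wCovByIn_gt hxB hox
        exact ⟨k, hk, hk.2.2 x hxB hox, .inr hok⟩
    obtain ⟨l, hl, hlm, hl_greatest⟩ := ih hk.1 (hm.imp_head fun h => ⟨h.1, hkx.trans h.2⟩)
    refine ⟨k :: l, hl.cons_cons hk, .cons hkx hlm, fun {G o' l'} hBG ho' hl' hl'm => ?_⟩
    cases hl'm with
    | @cons k' _ l' _ hk'x hl'm =>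
      obtain ⟨hk', hl'⟩ := List.isChain_cons_cons.1 hl'
      have hk'k : k' ≤ k := by
        rcases hk_greatest with rfl | hok
        · exact hk'x
        · exact hk'.2.2 k (hBG hk.1) (ho'.trans_lt hok)
      exact .cons hk'k (hl_greatest hBG hk'k hl' hl'm)

theorem exists_least_isChain_wCovByIn [WellFoundedLT α] {B : Set α} {o top : α} {m : List α}
    (ho : o ∈ B) (hm : (o :: m).IsChain fun a b => ∀ c ∈ B, a < c → b ≤ c)
    (htop : top ∈ B) (hm_top : ∀ x ∈ m, x ≤ top) :
    ∃ l : List α, (o :: l).IsChain (WCovByIn B) ∧ List.Forall₂ (· ≤ ·) m l ∧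
      ∀ {G : Set α} {o' : α} {l' : List α}, G ⊆ B → o ≤ o' → (o' :: l').IsChain (WCovByIn G) →
        List.Forall₂ (· ≤ ·) m l' → List.Forall₂ (· ≤ ·) l l' := by
  induction m generalizing o with
  | nil => exact ⟨[], .singleton _, .nil, fun _ _ _ h => h⟩
  | cons x m ih =>
    obtain ⟨hx, hm⟩ := List.isChain_cons_cons.1 hm
    obtain ⟨k, hk, hxk, hk_least⟩ :
        ∃ k, WCovByIn B o k ∧ x ≤ k ∧ ∀ b ∈ B, o ≤ b → x ≤ b → k ≤ b := by
      rcases le_or_gt x o with hxo | hox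
      · exact ⟨o, ⟨ho, le_rfl, fun _ _ h => h.le⟩, hxo, fun _ _ h _ => h⟩
      · obtain ⟨k, hok, hk⟩ := exists_wCovByIn_gt htop (hox.trans_le (hm_top x (by simp)))
        exact ⟨k, hk, hx k hk.1 hok, fun b hb _ hxb => hk.2.2 b hb (hox.trans_le hxb)⟩
    obtain ⟨l, hl, hml, hl_least⟩ := ih hk.1
      (hm.imp_head fun h c hc hkc => h c hc (hxk.trans_lt hkc)) fun y hy => hm_top y (by simp [hy])
    refine ⟨k :: l, hl.cons_cons hk, .cons hxk hml, fun {G o' l'} hGB ho' hl' hml' => ?_⟩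
    cases hml' with
    | @cons _ k' _ l' hxk' hml' =>
      obtain ⟨hk', hl'⟩ := List.isChain_cons_cons.1 hl'
      have hkk' : k ≤ k' := hk_least k' (hGB hk'.1) (ho'.trans hk'.2.1) hxk'
      exact .cons hkk' (hl_least hGB hkk' hl' hml')

theorem exists_inf_isChain_wCovByIn [WellFoundedLT α] {B B₁ B₂ : Set α} {o : α} {l₁ l₂ : List α}
    (ho : o ∈ B) (hB₁ : B₁ ⊆ B) (hB₂ : B₂ ⊆ B) (hlen : l₁.length = l₂.length)
    (hl₁ : (o :: l₁).IsChain (WCovByIn B₁)) (hl₂ : (o :: l₂).IsChain (WCovByIn B₂)) :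
    ∃ l : List α, (o :: l).IsChain (WCovByIn B) ∧
      List.Forall₂ (· ≤ ·) l l₁ ∧ List.Forall₂ (· ≤ ·) l l₂ ∧
      ∀ {G : Set α} {l' : List α}, B ⊆ G → (o :: l').IsChain (WCovByIn G) →
        List.Forall₂ (· ≤ ·) l' l₁ → List.Forall₂ (· ≤ ·) l' l₂ → List.Forall₂ (· ≤ ·) l' l := by
  have hmin : (o :: List.zipWith (· ⊓ ·) l₁ l₂).IsChain fun a b => b ∈ B ∧ a ≤ b := by
    simpa using isChain_zipWith (f := (· ⊓ ·)) (fun a a' b b' ha hb =>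
      ⟨min_rec' (· ∈ B) (hB₁ ha.1) (hB₂ hb.1), min_le_min ha.2.1 hb.2.1⟩) hl₁ hl₂
  obtain ⟨l, hl, hlm, hl_greatest⟩ := exists_greatest_isChain_wCovByIn ho hmin
  exact ⟨l, hl, ((forall₂_le_zipWith_inf_iff hlen).1 hlm).1,
    ((forall₂_le_zipWith_inf_iff hlen).1 hlm).2, fun hBG hl' h₁ h₂ =>
    hl_greatest hBG le_rfl hl' ((forall₂_le_zipWith_inf_iff hlen).2 ⟨h₁, h₂⟩)⟩

theorem exists_sup_isChain_wCovByIn [WellFoundedLT α] {B B₁ B₂ : Set α} {o top : α}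
    {l₁ l₂ : List α} (ho : o ∈ B) (htop : top ∈ B) (hB₁ : B ⊆ B₁) (hB₂ : B ⊆ B₂)
    (hlen : l₁.length = l₂.length) (hl₁ : (o :: l₁).IsChain (WCovByIn B₁))
    (hl₂ : (o :: l₂).IsChain (WCovByIn B₂)) (h_top₁ : ∀ x ∈ l₁, x ≤ top)
    (h_top₂ : ∀ x ∈ l₂, x ≤ top) :
    ∃ l : List α, (o :: l).IsChain (WCovByIn B) ∧
      List.Forall₂ (· ≤ ·) l₁ l ∧ List.Forall₂ (· ≤ ·) l₂ l ∧
      ∀ {G : Set α} {l' : List α}, G ⊆ B → (o :: l').IsChain (WCovByIn G) →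
        List.Forall₂ (· ≤ ·) l₁ l' → List.Forall₂ (· ≤ ·) l₂ l' → List.Forall₂ (· ≤ ·) l l' := by
  have hmax : (o :: List.zipWith (· ⊔ ·) l₁ l₂).IsChain fun a b => ∀ c ∈ B, a < c → b ≤ c := by
    simpa using isChain_zipWith (f := (· ⊔ ·)) (fun a a' b b' ha hb c hc hac =>
      max_le (ha.2.2 c (hB₁ hc) (max_lt_iff.1 hac).1) (hb.2.2 c (hB₂ hc) (max_lt_iff.1 hac).2))
      hl₁ hl₂
  have hmax_top : ∀ x ∈ List.zipWith (· ⊔ ·) l₁ l₂, x ≤ top := by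
    intro x hx
    obtain ⟨i, hi, rfl⟩ := List.getElem_of_mem hx
    simpa using ⟨h_top₁ _ (List.getElem_mem _), h_top₂ _ (List.getElem_mem _)⟩
  obtain ⟨l, hl, hml, hl_least⟩ := exists_least_isChain_wCovByIn ho hmax htop hmax_top
  exact ⟨l, hl, ((forall₂_zipWith_sup_le_iff hlen).1 hml).1,
    ((forall₂_zipWith_sup_le_iff hlen).1 hml).2, fun hGB hl' h₁ h₂ =>
    hl_least hGB le_rfl hl' ((forall₂_zipWith_sup_le_iff hlen).2 ⟨h₁, h₂⟩)⟩

end WeakCovers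

section RaisedWithin

variable {α : Type*} [Preorder α]

/-- `RaisedWithin T a b`: every upper bound of `a` in `T` bounds `b`, so that replacing `a` by `b`
does not jump over an element of `T`. -/
def RaisedWithin (T : Set α) (a b : α) : Prop := ∀ c ∈ T, a ≤ c → b ≤ c

instance (T : Set α) : Std.Refl (RaisedWithin T) := ⟨fun _ _ _ h => h⟩

theorem forall₂_raisedWithin_of_forall_mem {T T' : Set α} {l l' : List α}
    (h : List.Forall₂ (RaisedWithin T) l l') (hT : ∀ a ∈ l, ∀ c ∈ T', a ≤ c → c ∈ T) :
    List.Forall₂ (RaisedWithin T') l l' := by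
  induction h with
  | nil => exact .nil
  | cons h _ ih =>
    exact .cons (fun c hc hac => h c (hT _ (by simp) c hc hac) hac)
      (ih fun a ha => hT a (by simp [ha]))

theorem forall₂_le_of_raisedWithin {T : Set α} {l l' m : List α}
    (h : List.Forall₂ (RaisedWithin T) l l') (hlm : List.Forall₂ (· ≤ ·) l m)
    (hm : ∀ c ∈ m, c ∈ T) : List.Forall₂ (· ≤ ·) l' m := by
  induction h generalizing m with
  | nil => exact hlm
  | cons h _ ih =>
    cases hlm with
    | cons hac hlm =>
      exact .cons (h _ (hm _ (by simp)) hac) (ih hlm fun c hc => hm c (by simp [hc]))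

end RaisedWithin

open STerm

variable {S : Type} {ar : S → ℕ}

section Words

@[simp]
theorem forestDecs_nil : forestDecs ([] : List (STerm S ar)) = [] := rfl

@[simp]
theorem forestDecs_cons (t : STerm S ar) (F : List (STerm S ar)) :
    forestDecs (t :: F) = t.decs ++ forestDecs F := by
  simp [forestDecs]

@[simp]
theorem forestDecs_append (F F' : List (STerm S ar)) :
    forestDecs (F ++ F') = forestDecs F ++ forestDecs F' := by
  simp [forestDecs]

@[simp]
theorem decs_leaf : (leaf : STerm S ar).decs = [] := rfl

theorem decs_node (g : S) (c : Fin (ar g) → STerm S ar) :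
    (node g c).decs = g :: forestDecs (List.ofFn c) := by
  simp [decs, forestDecs, List.map_ofFn, Function.comp_def]

@[simp]
theorem degree_leaf : (leaf : STerm S ar).degree = 0 := rfl

@[simp]
theorem length_decs (t : STerm S ar) : t.decs.length = t.degree := by
  induction t with
  | leaf => rfl
  | node g c ih =>
    simp [decs_node, forestDecs, degree, List.length_flatten, List.map_ofFn, List.sum_ofFn, ih,
      add_comm]

theorem degree_pos {t : STerm S ar} (ht : t ≠ leaf) : 0 < t.degree := by
  cases t with
  | leaf => exact absurd rfl ht
  | node g c => rw [degree]; omega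

theorem graftRight_node {g : S} (c : Fin (ar g) → STerm S ar) {i : Fin (ar g)}
    (hi : (i : ℕ) + 1 = ar g) (s : STerm S ar) :
    (node g c).graftRight s = node g (Function.update c i ((c i).graftRight s)) := by
  rw [graftRight]
  congr 1
  funext j
  obtain rfl | hij := eq_or_ne j i
  · simp [← hi]
  · rw [Function.update_of_ne hij, if_neg (by omega)]

theorem graftRight_ne_leaf_of_left {t : STerm S ar} (ht : t ≠ leaf) (s : STerm S ar) :
    t.graftRight s ≠ leaf := by
  cases t with
  | leaf => exact absurd rfl ht
  | node g c => simp [graftRight]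

theorem decs_graftRight (hpos : ∀ g, 0 < ar g) (t s : STerm S ar) :
    (t.graftRight s).decs = t.decs ++ s.decs := by
  induction t with
  | leaf => simp [graftRight]
  | node g c ih =>
    have hi : ar g - 1 + 1 = ar g := Nat.sub_add_cancel (hpos g)
    obtain ⟨p, hp, hc⟩ := exists_ofFn_eq_concat c (i := ⟨ar g - 1, by omega⟩) hi
    rw [graftRight_node c (i := ⟨ar g - 1, by omega⟩) hi, decs_node, decs_node,
      ofFn_update_of_eq_append_cons hc hp, hc]
    simp [ih]

theorem degree_graftRight (hpos : ∀ g, 0 < ar g) (t s : STerm S ar) :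
    (t.graftRight s).degree = t.degree + s.degree := by
  simp [← length_decs, decs_graftRight hpos]

end Words

section Moves

theorem _root_.STerm.TermMove.ne_leaf_s4 {t t' : STerm S ar} (h : TermMove t t') :
    t ≠ leaf ∧ t' ≠ leaf := by
  cases h <;> simp

theorem _root_.STerm.TermMove.decs_eq_s4 (hpos : ∀ g, 0 < ar g) {t t' : STerm S ar}
    (h : TermMove t t') : t'.decs = t.decs := by
  induction h with
  | here g c i j hij _ =>
    obtain ⟨p, q, hp, hc⟩ := exists_ofFn_eq_append_cons_cons c hij
    rw [decs_node, decs_node, hc, ofFn_update_update_of_eq_append_cons_cons hc hp hij]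
    simp [decs_graftRight hpos]
  | child g c i t' _ ih =>
    obtain ⟨p, q, hp, hc⟩ := exists_ofFn_eq_append_cons c i
    rw [decs_node, decs_node, ofFn_update_of_eq_append_cons hc hp, hc]
    simp [ih]

theorem _root_.STerm.TermMove.degree_eq (hpos : ∀ g, 0 < ar g) {t t' : STerm S ar}
    (h : TermMove t t') : t'.degree = t.degree := by
  rw [← length_decs, ← length_decs, h.decs_eq_s4 hpos]

theorem _root_.ForestMove.append_left (E : List (STerm S ar)) {F F' : List (STerm S ar)}
    (h : ForestMove F F') : ForestMove (E ++ F) (E ++ F') := by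
  cases h with
  | root p t t' q ht => simpa using ForestMove.root (E ++ p) t t' q ht
  | tree p t t' q ht => simpa using ForestMove.tree (E ++ p) t t' q ht

theorem _root_.ForestMove.cons_cases {t : STerm S ar} {F X : List (STerm S ar)}
    (h : ForestMove (t :: F) X) :
    (∃ F', ForestMove F F' ∧ X = t :: F') ∨ (∃ t', TermMove t t' ∧ X = t' :: F) ∨
      ∃ t' F', t' ≠ leaf ∧ F = t' :: F' ∧ X = t.graftRight t' :: F' := by
  generalize hy : t :: F = y at h
  cases h with
  | root p s s' q hs =>
    cases p with
    | nil =>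
      obtain ⟨rfl, rfl⟩ := List.cons_eq_cons.1 hy
      exact .inr (.inr ⟨s', q, hs, rfl, rfl⟩)
    | cons x p =>
      obtain ⟨rfl, rfl⟩ := List.cons_eq_cons.1 hy
      exact .inl ⟨_, .root p s s' q hs, rfl⟩
  | tree p s s' q hs =>
    cases p with
    | nil =>
      obtain ⟨rfl, rfl⟩ := List.cons_eq_cons.1 hy
      exact .inr (.inl ⟨s', hs, rfl⟩)
    | cons x p =>
      obtain ⟨rfl, rfl⟩ := List.cons_eq_cons.1 hy
      exact .inl ⟨_, .tree p s s' q hs, rfl⟩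

theorem _root_.ForestMove.decs_eq_s4 (hpos : ∀ g, 0 < ar g) {F F' : List (STerm S ar)}
    (h : ForestMove F F') : forestDecs F' = forestDecs F := by
  cases h with
  | root p t t' q _ => simp [decs_graftRight hpos]
  | tree p t t' q ht => simp [ht.decs_eq_s4 hpos]

theorem _root_.ForestMove.isReducedF_s4 {F F' : List (STerm S ar)} (h : ForestMove F F')
    (hF : IsReducedF F) : IsReducedF F' := by
  cases h with
  | root p t t' q _ =>
    have ht := graftRight_ne_leaf_of_left (hF t (by simp)) t'
    simp only [IsReducedF, List.mem_append, List.mem_cons] at hF ⊢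
    grind
  | tree p t t' q ht =>
    have ht' := ht.ne_leaf_s4.2
    simp only [IsReducedF, List.mem_append, List.mem_cons] at hF ⊢
    grind

theorem _root_.EWLe.decs_eq_s4 (hpos : ∀ g, 0 < ar g) {F F' : List (STerm S ar)} (h : EWLe F F') :
    forestDecs F' = forestDecs F := by
  induction h with
  | refl => rfl
  | tail _ h ih => rw [h.decs_eq_s4 hpos, ih]

theorem _root_.EWLe.isReducedF_s4 {F F' : List (STerm S ar)} (h : EWLe F F')
    (hF : IsReducedF F) : IsReducedF F' := by
  induction h with
  | refl => exact hF
  | tail _ h ih => exact h.isReducedF_s4 ih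

end Moves

section Prune

/-- The map `rd` of the paper, seen as an endomap of sequences of terms: the reduced forest of the
non-leaf entries. -/
def prune (cs : List (STerm S ar)) : List (STerm S ar) := (rdF cs).map Subtype.val

@[simp]
theorem prune_nil : prune ([] : List (STerm S ar)) = [] := rfl

@[simp]
theorem prune_leaf_cons (cs : List (STerm S ar)) : prune (leaf :: cs) = prune cs := rfl

theorem prune_cons_of_ne {t : STerm S ar} (ht : t ≠ leaf) (cs : List (STerm S ar)) :
    prune (t :: cs) = t :: prune cs := by
  cases t with
  | leaf => exact absurd rfl ht
  | node g c => rfl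

@[simp]
theorem prune_replicate_leaf (n : ℕ) : prune (List.replicate n (leaf : STerm S ar)) = [] := by
  induction n with
  | zero => rfl
  | succ n ih => rw [List.replicate_succ, prune_leaf_cons, ih]

theorem prune_append (cs cs' : List (STerm S ar)) :
    prune (cs ++ cs') = prune cs ++ prune cs' := by
  induction cs with
  | nil => rfl
  | cons t cs ih => cases t <;> simp_all [prune_cons_of_ne]

theorem isReducedF_prune (cs : List (STerm S ar)) : IsReducedF (prune cs) := by
  intro t ht
  obtain ⟨t, -, rfl⟩ := List.mem_map.1 ht
  exact t.2

@[simp]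
theorem forestDecs_prune (cs : List (STerm S ar)) : forestDecs (prune cs) = forestDecs cs := by
  induction cs with
  | nil => rfl
  | cons t cs ih => cases t <;> simp [prune_cons_of_ne, ih]

end Prune

section Boundaries

/-- The positions, in the preorder numbering starting from `o`, at which the successive terms of a
sequence end. -/
def ends (o : ℕ) : List (STerm S ar) → List ℕ
  | [] => []
  | t :: cs => (o + t.degree) :: ends (o + t.degree) cs

@[simp]
theorem ends_nil (o : ℕ) : ends o ([] : List (STerm S ar)) = [] := rfl

@[simp]
theorem ends_cons (o : ℕ) (t : STerm S ar) (cs : List (STerm S ar)) :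
    ends o (t :: cs) = (o + t.degree) :: ends (o + t.degree) cs := rfl

@[simp]
theorem length_ends (o : ℕ) (cs : List (STerm S ar)) : (ends o cs).length = cs.length := by
  induction cs generalizing o with
  | nil => rfl
  | cons t cs ih => simp [ih]

@[simp]
theorem ends_replicate_leaf (o n : ℕ) :
    ends o (List.replicate n (leaf : STerm S ar)) = List.replicate n o := by
  induction n with
  | zero => rfl
  | succ n ih => simp [List.replicate_succ, ih]

theorem ends_append (o : ℕ) (cs cs' : List (STerm S ar)) :
    ends o (cs ++ cs') = ends o cs ++ ends (o + (forestDecs cs).length) cs' := by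
  induction cs generalizing o with
  | nil => simp
  | cons t cs ih => simp [ih, add_assoc]

theorem le_of_mem_ends {o k : ℕ} {cs : List (STerm S ar)} (hk : k ∈ ends o cs) : o ≤ k := by
  induction cs generalizing o with
  | nil => simp at hk
  | cons t cs ih =>
    rcases List.mem_cons.1 hk with rfl | hk
    · omega
    · exact (Nat.le_add_right _ _).trans (ih hk)

theorem mem_ends_le {o k : ℕ} {cs : List (STerm S ar)} (hk : k ∈ ends o cs) :
    k ≤ o + (forestDecs cs).length := by
  induction cs generalizing o with
  | nil => simp at hk
  | cons t cs ih =>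
    simp only [forestDecs_cons, List.length_append, length_decs, ← add_assoc]
    rcases List.mem_cons.1 hk with rfl | hk
    · omega
    · exact ih hk

theorem ends_mono {o o' : ℕ} (h : o ≤ o') (cs : List (STerm S ar)) :
    List.Forall₂ (· ≤ ·) (ends o cs) (ends o' cs) := by
  induction cs generalizing o o' with
  | nil => exact .nil
  | cons t cs ih => exact .cons (by omega) (ih (by omega))

/-- The boundaries of a forest: the positions, in the preorder numbering starting from `o`, at which
one of its trees starts or ends. -/
def cuts (o : ℕ) (F : List (STerm S ar)) : Set ℕ := {b | b ∈ o :: ends o F}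

theorem cuts_cons (o : ℕ) (t : STerm S ar) (F : List (STerm S ar)) :
    cuts o (t :: F) = insert o (cuts (o + t.degree) F) := by
  ext b
  simp [cuts]

theorem self_mem_cuts (o : ℕ) (F : List (STerm S ar)) : o ∈ cuts o F := by
  simp [cuts]

theorem le_of_mem_cuts {o b : ℕ} {F : List (STerm S ar)} (hb : b ∈ cuts o F) : o ≤ b := by
  rcases List.mem_cons.1 hb with rfl | hb
  · rfl
  · exact le_of_mem_ends hb

theorem add_degree_le_of_mem_cuts_cons {o b : ℕ} {t : STerm S ar} {F : List (STerm S ar)}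
    (hb : b ∈ cuts o (t :: F)) (hob : o < b) : o + t.degree ≤ b := by
  rw [cuts_cons] at hb
  exact le_of_mem_cuts (hb.resolve_left hob.ne')

theorem add_length_mem_cuts (o : ℕ) (F : List (STerm S ar)) :
    o + (forestDecs F).length ∈ cuts o F := by
  induction F generalizing o with
  | nil => simp [cuts]
  | cons t F ih =>
    rw [cuts_cons]
    exact .inr (by simpa [add_assoc] using ih (o + t.degree))

theorem _root_.ForestMove.cuts_subset (hpos : ∀ g, 0 < ar g) {F F' : List (STerm S ar)}
    (h : ForestMove F F') (o : ℕ) : cuts o F' ⊆ cuts o F := by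
  rintro b hb
  cases h with
  | root p t t' q _ =>
    simp only [cuts, ends_append, ends_cons, degree_graftRight hpos, List.mem_cons,
      List.mem_append, Set.mem_ofPred_eq, ← add_assoc] at hb ⊢
    tauto
  | tree p t t' q ht => simpa [cuts, ends_append, ht.degree_eq hpos] using hb

theorem _root_.EWLe.cuts_subset (hpos : ∀ g, 0 < ar g) {F F' : List (STerm S ar)}
    (h : EWLe F F') (o : ℕ) : cuts o F' ⊆ cuts o F := by
  induction h with
  | refl => rfl
  | tail _ h ih => exact (h.cuts_subset hpos o).trans ih

theorem isChain_ends (o : ℕ) (cs r : List (STerm S ar)) :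
    (o :: ends o cs).IsChain (WCovByIn (cuts o (prune cs ++ r))) := by
  induction cs generalizing o with
  | nil => simp
  | cons t cs ih =>
    obtain rfl | ht := eq_or_ne t leaf
    · exact (ih o).cons_cons ⟨self_mem_cuts _ _, le_rfl, fun _ _ h => h.le⟩
    · have hd := degree_pos ht
      rw [prune_cons_of_ne ht, List.cons_append]
      refine List.IsChain.cons_cons ⟨?_, by omega, fun _ => add_degree_le_of_mem_cuts_cons⟩ ?_
      · rw [cuts_cons]
        exact .inr (self_mem_cuts _ _)
      · rw [cuts_cons, isChain_wCovByIn_insert (by omega)]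
        exact ih _

theorem mem_cuts_of_mem_ends {o k : ℕ} {cs : List (STerm S ar)} (hk : k ∈ ends o cs)
    (r : List (STerm S ar)) : k ∈ cuts o (prune cs ++ r) :=
  mem_of_isChain_wCovByIn (isChain_ends o cs r) hk

theorem exists_ends_eq_of_isChain {o : ℕ} {F : List (STerm S ar)} {ks : List ℕ}
    (hF : IsReducedF F) (h : (o :: ks).IsChain (WCovByIn (cuts o F))) :
    ∃ cs r, prune cs ++ r = F ∧ ends o cs = ks := by
  induction ks generalizing o F with
  | nil => exact ⟨[], F, rfl, rfl⟩
  | cons k ks ih =>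
    obtain ⟨hk, hks⟩ := List.isChain_cons_cons.1 h
    obtain rfl | hok := hk.2.1.eq_or_lt
    · obtain ⟨cs, r, rfl, rfl⟩ := ih hF hks
      exact ⟨leaf :: cs, r, rfl, rfl⟩
    · cases F with
      | nil => simp [WCovByIn, cuts, hok.ne'] at hk
      | cons t F =>
        have ht : t ≠ leaf := hF t (by simp)
        have hd := degree_pos ht
        obtain rfl : k = o + t.degree := by
          refine le_antisymm (hk.2.2 _ ?_ (by omega)) (add_degree_le_of_mem_cuts_cons hk.1 hok)
          rw [cuts_cons]
          exact .inr (self_mem_cuts _ _)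
        rw [cuts_cons, isChain_wCovByIn_insert (by omega)] at hks
        obtain ⟨cs, r, rfl, rfl⟩ := ih (fun x hx => hF x (by simp [hx])) hks
        exact ⟨t :: cs, r, by rw [prune_cons_of_ne ht, List.cons_append], rfl⟩

end Boundaries

section Slots

/-- The trace of an easterly wind move on a pair `(cs, r)` made of the sequence `cs` of children of
the root of the first tree of a forest and of the sequence `r` of the other trees of this forest. -/
inductive SlotMove : List (STerm S ar) × List (STerm S ar) →
    List (STerm S ar) × List (STerm S ar) → Prop
  | inner (p : List (STerm S ar)) (t t' : STerm S ar) (q r : List (STerm S ar)) :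
      TermMove t t' → SlotMove (p ++ t :: q, r) (p ++ t' :: q, r)
  | shift (p : List (STerm S ar)) (t t' : STerm S ar) (q r : List (STerm S ar)) :
      t' ≠ leaf → SlotMove (p ++ t :: t' :: q, r) (p ++ t.graftRight t' :: leaf :: q, r)
  | last (p : List (STerm S ar)) (t t' : STerm S ar) (r : List (STerm S ar)) :
      t' ≠ leaf → SlotMove (p ++ [t], t' :: r) (p ++ [t.graftRight t'], r)
  | rest (p r r' : List (STerm S ar)) : ForestMove r r' → SlotMove (p, r) (p, r')

/-- The order on pairs `(cs, r)` corresponding to the order `EWLe` on the forests whose first root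
has `cs` as sequence of children and whose other trees are `r`. -/
def SlotLe (s s' : List (STerm S ar) × List (STerm S ar)) : Prop :=
  Relation.ReflTransGen SlotMove s s'

theorem SlotMove.cons (c : STerm S ar) {cs r cs' r' : List (STerm S ar)}
    (h : SlotMove (cs, r) (cs', r')) : SlotMove (c :: cs, r) (c :: cs', r') := by
  cases h with
  | inner p t t' q _ ht => exact .inner (c :: p) t t' q r ht
  | shift p t t' q _ ht => exact .shift (c :: p) t t' q r ht
  | last p t t' _ ht => exact .last (c :: p) t t' _ ht
  | rest _ _ _ hr => exact .rest _ _ _ hr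

theorem SlotLe.cons (c : STerm S ar) {cs r cs' r' : List (STerm S ar)}
    (h : SlotLe (cs, r) (cs', r')) : SlotLe (c :: cs, r) (c :: cs', r') :=
  Relation.ReflTransGen.lift (r := SlotMove) (p := SlotMove) (fun s => (c :: s.1, s.2))
    (fun _ _ => SlotMove.cons c) _ _ h

theorem _root_.ForestMove.exists_slotMove (hpos : ∀ g, 0 < ar g) {g : S}
    {c : Fin (ar g) → STerm S ar} {r X : List (STerm S ar)} (h : ForestMove (node g c :: r) X) :
    ∃ c' r', X = node g c' :: r' ∧ SlotMove (List.ofFn c, r) (List.ofFn c', r') := by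
  obtain ⟨r', hr, rfl⟩ | ⟨t', ht, rfl⟩ | ⟨t', r', ht', rfl, rfl⟩ := h.cons_cases
  · exact ⟨c, r', rfl, .rest _ _ _ hr⟩
  · cases ht with
    | here _ _ i j hij hj =>
      obtain ⟨p, q, hp, hc⟩ := exists_ofFn_eq_append_cons_cons c hij
      refine ⟨_, r, rfl, ?_⟩
      rw [ofFn_update_update_of_eq_append_cons_cons hc hp hij, hc]
      exact .shift p _ _ q r hj
    | child _ _ i t' ht =>
      obtain ⟨p, q, hp, hc⟩ := exists_ofFn_eq_append_cons c i
      refine ⟨_, r, rfl, ?_⟩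
      rw [ofFn_update_of_eq_append_cons hc hp, hc]
      exact .inner p _ _ q r ht
  · have hi : ar g - 1 + 1 = ar g := Nat.sub_add_cancel (hpos g)
    obtain ⟨p, hp, hc⟩ := exists_ofFn_eq_concat c (i := ⟨ar g - 1, by omega⟩) hi
    refine ⟨_, r', by rw [graftRight_node c (i := ⟨ar g - 1, by omega⟩) hi], ?_⟩
    rw [ofFn_update_of_eq_append_cons hc hp, hc]
    exact .last p _ _ r' ht'

theorem SlotMove.exists_forestMove {g : S} {c : Fin (ar g) → STerm S ar}
    {r : List (STerm S ar)} {s : List (STerm S ar) × List (STerm S ar)}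
    (h : SlotMove (List.ofFn c, r) s) :
    ∃ c', s.1 = List.ofFn c' ∧ ForestMove (node g c :: r) (node g c' :: s.2) := by
  generalize hs₀ : (List.ofFn c, r) = s₀ at h
  cases h with
  | inner p t t' q _ ht =>
    obtain ⟨hc, rfl⟩ := Prod.mk.inj hs₀
    obtain ⟨i, hi, rfl⟩ := exists_eq_of_ofFn_eq_append_cons hc
    exact ⟨_, (ofFn_update_of_eq_append_cons hc hi t').symm, .tree [] _ _ r (.child g c i t' ht)⟩
  | shift p t t' q _ ht =>
    obtain ⟨hc, rfl⟩ := Prod.mk.inj hs₀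
    obtain ⟨i, hi, rfl⟩ := exists_eq_of_ofFn_eq_append_cons hc
    obtain ⟨j, hj, rfl⟩ := exists_eq_of_ofFn_eq_append_cons (p := p ++ [c i]) (q := q) (x := t')
      (by simpa using hc)
    have hij : (j : ℕ) = i + 1 := by simp [hj, hi]
    refine ⟨_, ?_, .tree [] _ _ r (.here g c i j hij ht)⟩
    exact (ofFn_update_update_of_eq_append_cons_cons hc hi hij _ _).symm
  | last p t t' r ht =>
    obtain ⟨hc, rfl⟩ := Prod.mk.inj hs₀
    obtain ⟨i, hi, rfl⟩ := exists_eq_of_ofFn_eq_append_cons hc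
    have hi' : (i : ℕ) + 1 = ar g := by simpa [hi, eq_comm] using congrArg List.length hc
    refine ⟨_, (ofFn_update_of_eq_append_cons hc hi _).symm, ?_⟩
    rw [← graftRight_node c hi']
    exact .root [] _ _ r ht
  | rest p _ r' hr =>
    obtain ⟨rfl, rfl⟩ := Prod.mk.inj hs₀
    exact ⟨c, rfl, hr.append_left [node g c]⟩

theorem _root_.EWLe.exists_slotLe (hpos : ∀ g, 0 < ar g) {g : S} {c : Fin (ar g) → STerm S ar}
    {r X : List (STerm S ar)} (h : EWLe (node g c :: r) X) :
    ∃ c' r', X = node g c' :: r' ∧ SlotLe (List.ofFn c, r) (List.ofFn c', r') := by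
  induction h with
  | refl => exact ⟨c, r, rfl, .refl⟩
  | tail _ h ih =>
    obtain ⟨c', r', rfl, hs⟩ := ih
    obtain ⟨c'', r'', rfl, hs'⟩ := h.exists_slotMove hpos
    exact ⟨c'', r'', rfl, hs.tail hs'⟩

theorem SlotLe.exists_ewLe {g : S} {c : Fin (ar g) → STerm S ar}
    {r : List (STerm S ar)} {s : List (STerm S ar) × List (STerm S ar)}
    (h : SlotLe (List.ofFn c, r) s) :
    ∃ c', s.1 = List.ofFn c' ∧ EWLe (node g c :: r) (node g c' :: s.2) := by
  induction h with
  | refl => exact ⟨c, rfl, .refl⟩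
  | @tail s s' _ h ih =>
    obtain ⟨c', hc', hF⟩ := ih
    obtain ⟨cs, r'⟩ := s
    obtain rfl : cs = List.ofFn c' := hc'
    obtain ⟨c'', hc'', hF'⟩ := h.exists_forestMove
    exact ⟨c'', hc'', hF.tail hF'⟩

theorem ewLe_node_cons_iff_slotLe (hpos : ∀ g, 0 < ar g) {g : S}
    {c c' : Fin (ar g) → STerm S ar} {r r' : List (STerm S ar)} :
    EWLe (node g c :: r) (node g c' :: r') ↔ SlotLe (List.ofFn c, r) (List.ofFn c', r') := by
  constructor
  · intro h
    obtain ⟨c'', r'', heq, hs⟩ := h.exists_slotLe hpos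
    obtain ⟨heq, rfl⟩ := List.cons_eq_cons.1 heq
    obtain rfl : c' = c'' := by simpa using heq
    exact hs
  · intro h
    obtain ⟨c'', hc'', hF⟩ := h.exists_ewLe
    rwa [List.ofFn_injective hc'']

end Slots

section Lifting

theorem SlotMove.ewLe {s s' : List (STerm S ar) × List (STerm S ar)} (h : SlotMove s s') :
    EWLe (prune s.1 ++ s.2) (prune s'.1 ++ s'.2) := by
  cases h with
  | inner p t t' q r ht =>
    simpa [EWLe, prune_append, prune_cons_of_ne, ht.ne_leaf_s4] using
      Relation.ReflTransGen.single (ForestMove.tree (prune p) t t' (prune q ++ r) ht)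
  | shift p t t' q r ht' =>
    obtain rfl | ht := eq_or_ne t leaf
    · simp [EWLe, prune_append, prune_cons_of_ne ht', graftRight, Relation.ReflTransGen.refl]
    · simpa [EWLe, prune_append, prune_cons_of_ne, ht, ht', graftRight_ne_leaf_of_left ht] using
        Relation.ReflTransGen.single (ForestMove.root (prune p) t t' (prune q ++ r) ht')
  | last p t t' r ht' =>
    obtain rfl | ht := eq_or_ne t leaf
    · simp [EWLe, prune_append, prune_cons_of_ne ht', graftRight, Relation.ReflTransGen.refl]
    · simpa [EWLe, prune_append, prune_cons_of_ne, ht, graftRight_ne_leaf_of_left ht] using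
        Relation.ReflTransGen.single (ForestMove.root (prune p) t t' r ht')
  | rest p r r' hr => exact .single (hr.append_left _)

theorem SlotMove.ends_le (hpos : ∀ g, 0 < ar g) {s s' : List (STerm S ar) × List (STerm S ar)}
    (h : SlotMove s s') (o : ℕ) : List.Forall₂ (· ≤ ·) (ends o s.1) (ends o s'.1) := by
  cases h with
  | inner p t t' q r ht =>
    simp [ends_append, ht.degree_eq hpos]
  | shift p t t' q r ht' =>
    simp only [ends_append, ends_cons, degree_graftRight hpos]
    exact List.rel_append (List.forall₂_refl _)
      (.cons (by omega) (.cons (by simp; omega) (ends_mono (by simp; omega) q)))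
  | last p t t' r ht' =>
    simp only [ends_append, ends_cons, degree_graftRight hpos]
    exact List.rel_append (List.forall₂_refl _) (.cons (by omega) .nil)
  | rest p r r' hr => exact List.forall₂_refl _

theorem SlotLe.ewLe {s s' : List (STerm S ar) × List (STerm S ar)} (h : SlotLe s s') :
    EWLe (prune s.1 ++ s.2) (prune s'.1 ++ s'.2) :=
  Relation.ReflTransGen.lift' (r := SlotMove) (p := ForestMove)
    (fun s : List (STerm S ar) × List (STerm S ar) => prune s.1 ++ s.2)
    (fun _ _ => SlotMove.ewLe) _ _ h

theorem SlotLe.ends_le (hpos : ∀ g, 0 < ar g) {s s' : List (STerm S ar) × List (STerm S ar)}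
    (h : SlotLe s s') (o : ℕ) : List.Forall₂ (· ≤ ·) (ends o s.1) (ends o s'.1) := by
  induction h with
  | refl => exact List.forall₂_refl _
  | tail _ h ih => exact forall₂_trans ih (h.ends_le hpos o)

-- The tree `t` slides left through the empty slots: it raises only ends that precede its own end
-- position, and exactly to that position.
theorem exists_slotLe_cons {cs r F : List (STerm S ar)} {t : STerm S ar} (ht : t ≠ leaf)
    (hcs : cs ≠ []) (h : prune cs ++ r = t :: F) (o : ℕ) :
    ∃ cs' r', prune cs' ++ r' = F ∧ SlotLe (cs, r) (t :: cs', r') ∧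
      List.Forall₂ (RaisedWithin (Set.Ici (o + t.degree))) (ends o cs) (ends o (t :: cs')) := by
  induction cs with
  | nil => exact absurd rfl hcs
  | cons c cs ih =>
    obtain rfl | hc := eq_or_ne c leaf
    · rw [prune_leaf_cons] at h
      obtain rfl | hcs := eq_or_ne cs []
      · obtain rfl : r = t :: F := h
        exact ⟨[], F, rfl, .single (.last [] leaf t F ht), .cons (fun b hb _ => hb) .nil⟩
      · obtain ⟨cs', r', hF, hle, hends⟩ := ih hcs h
        exact ⟨leaf :: cs', r', hF, (hle.cons leaf).tail (.shift [] leaf t cs' r' ht),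
          .cons (fun b hb _ => hb) hends⟩
    · rw [prune_cons_of_ne hc, List.cons_append] at h
      obtain ⟨rfl, rfl⟩ := List.cons_eq_cons.1 h
      exact ⟨cs, r, rfl, .refl, List.forall₂_refl _⟩

theorem slotLe_of_prune_eq {cs r cs' r' : List (STerm S ar)} {o : ℕ}
    (h : prune cs ++ r = prune cs' ++ r')
    (hends : List.Forall₂ (· ≤ ·) (ends o cs) (ends o cs')) : SlotLe (cs, r) (cs', r') := by
  induction cs' generalizing cs r o with
  | nil =>
    obtain rfl : cs = [] := by simpa using hends.length_eq
    obtain rfl : r = r' := h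
    exact .refl
  | cons c' cs' ih =>
    have hcs : cs ≠ [] := by rintro rfl; simpa using hends.length_eq
    obtain rfl | hc' := eq_or_ne c' leaf
    · obtain ⟨c, cs, rfl⟩ := List.exists_cons_of_ne_nil hcs
      obtain ⟨hc, hends⟩ := List.forall₂_cons.1 hends
      obtain rfl : c = leaf := by
        by_contra hne
        have := degree_pos hne
        simp only [degree_leaf] at hc
        omega
      exact (ih (cs := cs) h hends).cons leaf
    · rw [prune_cons_of_ne hc', List.cons_append] at h
      obtain ⟨cs₁, r₁, hF, hle, hends₁⟩ := exists_slotLe_cons hc' hcs h o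
      have hends₂ := forall₂_le_of_raisedWithin hends₁ hends fun k hk => by
        rcases List.mem_cons.1 hk with rfl | hk
        · exact Set.self_mem_Ici
        · exact le_of_mem_ends hk
      exact hle.trans ((ih hF (List.forall₂_cons.1 hends₂).2).cons c')

theorem exists_slotLe_of_graftRight (hpos : ∀ g, 0 < ar g) {cs r F : List (STerm S ar)}
    {t t' : STerm S ar} (ht : t ≠ leaf) (ht' : t' ≠ leaf) (h : prune cs ++ r = t' :: F) (o : ℕ) :
    ∃ cs' r', prune cs' ++ r' = t.graftRight t' :: F ∧ SlotLe (t :: cs, r) (cs', r') ∧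
      List.Forall₂ (RaisedWithin (cuts o (t.graftRight t' :: F))) (ends o (t :: cs))
        (ends o cs') := by
  have hd := degree_pos ht
  have hcuts : ∀ {a b}, o + t.degree ≤ a → b ∈ cuts o (t.graftRight t' :: F) → a ≤ b →
      o + t.degree + t'.degree ≤ b := by
    intro a b ha hb hab
    have := add_degree_le_of_mem_cuts_cons hb (by omega)
    rwa [degree_graftRight hpos, ← add_assoc] at this
  have hgraft := graftRight_ne_leaf_of_left ht t'
  obtain rfl | hcs := eq_or_ne cs []
  · obtain rfl : r = t' :: F := h
    refine ⟨[t.graftRight t'], F, by simp [prune_cons_of_ne hgraft],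
      .single (.last [] t t' F ht'), .cons (fun b hb hab => ?_) .nil⟩
    rw [degree_graftRight hpos, ← add_assoc]
    exact hcuts le_rfl hb hab
  · obtain ⟨cs', r', rfl, hle, hends⟩ := exists_slotLe_cons ht' hcs h (o + t.degree)
    refine ⟨t.graftRight t' :: leaf :: cs', r', by simp [prune_cons_of_ne hgraft],
      (hle.cons t).tail (.shift [] t t' cs' r' ht'), ?_⟩
    have hends' := forall₂_raisedWithin_of_forall_mem hends fun a ha b hb hab =>
      hcuts (le_of_mem_ends ha) hb hab
    simp only [ends_cons, degree_graftRight hpos, degree_leaf, ← add_assoc, add_zero]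
    exact .cons (fun b hb hab => hcuts le_rfl hb hab) hends'

theorem _root_.ForestMove.exists_slotLe (hpos : ∀ g, 0 < ar g) {cs r F : List (STerm S ar)}
    (h : ForestMove (prune cs ++ r) F) (o : ℕ) :
    ∃ cs' r', prune cs' ++ r' = F ∧ SlotLe (cs, r) (cs', r') ∧
      List.Forall₂ (RaisedWithin (cuts o F)) (ends o cs) (ends o cs') := by
  induction cs generalizing F o with
  | nil => exact ⟨[], F, rfl, .single (.rest _ _ _ h), .nil⟩
  | cons t cs ih =>
    obtain rfl | ht := eq_or_ne t leaf
    · obtain ⟨cs', r', hF, hle, hends⟩ := ih h o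
      exact ⟨leaf :: cs', r', hF, hle.cons leaf, .cons (fun _ _ h => h) hends⟩
    · rw [prune_cons_of_ne ht] at h
      obtain ⟨F', hmove, rfl⟩ | ⟨t', hmove, rfl⟩ | ⟨t', F', ht', hF, rfl⟩ := h.cons_cases
      · obtain ⟨cs', r', rfl, hle, hends⟩ := ih hmove (o + t.degree)
        refine ⟨t :: cs', r', by rw [prune_cons_of_ne ht, List.cons_append], hle.cons t,
          .cons (fun _ _ h => h) (forall₂_raisedWithin_of_forall_mem hends ?_)⟩
        intro a ha b hb hab
        have hd := degree_pos ht
        have hoa := le_of_mem_ends ha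
        rw [cuts_cons] at hb
        exact hb.resolve_left (by omega)
      · refine ⟨t' :: cs, r, by rw [prune_cons_of_ne hmove.ne_leaf_s4.2]; rfl,
          .single (.inner [] t t' cs r hmove), ?_⟩
        rw [ends_cons, ends_cons, hmove.degree_eq hpos]
        exact List.forall₂_refl _
      · exact exists_slotLe_of_graftRight hpos ht ht' hF o

theorem slotLe_of_ewLe (hpos : ∀ g, 0 < ar g) {cs r cs' r' : List (STerm S ar)} {o : ℕ}
    (h : EWLe (prune cs ++ r) (prune cs' ++ r'))
    (hends : List.Forall₂ (· ≤ ·) (ends o cs) (ends o cs')) : SlotLe (cs, r) (cs', r') := by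
  generalize hF : prune cs ++ r = F at h
  induction h using Relation.ReflTransGen.head_induction_on generalizing cs r with
  | refl => exact slotLe_of_prune_eq hF hends
  | head h h' ih =>
    subst hF
    obtain ⟨cs₁, r₁, hF₁, hle, hends₁⟩ := h.exists_slotLe hpos o
    -- Moves only delete boundaries, so the ends of the target are boundaries of the intermediate
    -- forest, over which the lifted move does not jump.
    refine hle.trans (ih (forall₂_le_of_raisedWithin hends₁ hends fun k hk => ?_) hF₁)
    exact EWLe.cuts_subset hpos h' o (mem_cuts_of_mem_ends hk r')

theorem ewLe_node_cons_iff (hpos : ∀ g, 0 < ar g) {g : S} {c c' : Fin (ar g) → STerm S ar}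
    {r r' : List (STerm S ar)} (o : ℕ) :
    EWLe (node g c :: r) (node g c' :: r') ↔
      EWLe (prune (List.ofFn c) ++ r) (prune (List.ofFn c') ++ r') ∧
        List.Forall₂ (· ≤ ·) (ends o (List.ofFn c)) (ends o (List.ofFn c')) := by
  rw [ewLe_node_cons_iff_slotLe hpos]
  exact ⟨fun h => ⟨h.ewLe, h.ends_le hpos o⟩, fun h => slotLe_of_ewLe hpos h.1 h.2⟩

end Lifting

section Intervals

/-- `HasWord w f`: the reduced forest `f` has `w` as word of decorations in preorder. These forests
turn out to be the elements of the interval `W(w)` of the paper, see `mem_interval_iff`. -/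
def HasWord (w : List S) (f : List (STerm S ar)) : Prop := IsReducedF f ∧ forestDecs f = w

theorem hasWord_nil_iff {f : List (STerm S ar)} : HasWord [] f ↔ f = [] := by
  constructor
  · rintro ⟨hf, hw⟩
    cases f with
    | nil => rfl
    | cons t f =>
      cases t with
      | leaf => exact absurd rfl (hf leaf (by simp))
      | node g c => simp [decs_node] at hw
  · rintro rfl
    exact ⟨by simp [IsReducedF], rfl⟩

theorem hasWord_cons_iff {g : S} {w : List S} {f : List (STerm S ar)} :
    HasWord (g :: w) f ↔ ∃ c r, f = node g c :: r ∧ HasWord w (prune (List.ofFn c) ++ r) := by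
  constructor
  · rintro ⟨hf, hw⟩
    rcases f with _ | ⟨_ | ⟨g', c⟩, r⟩
    · simp at hw
    · exact absurd rfl (hf leaf (by simp))
    · simp only [forestDecs_cons, decs_node, List.cons_append, List.cons.injEq] at hw
      obtain ⟨rfl, hw⟩ := hw
      refine ⟨c, r, rfl, fun t ht => ?_, by simpa using hw⟩
      rcases List.mem_append.1 ht with ht | ht
      · exact isReducedF_prune _ t ht
      · exact hf t (by simp [ht])
  · rintro ⟨c, r, rfl, hr, hw⟩
    refine ⟨fun t ht => ?_, by simpa [decs_node] using hw⟩
    rcases List.mem_cons.1 ht with rfl | ht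
    · simp
    · exact hr t (by simp [ht])

theorem HasWord.of_ewLe (hpos : ∀ g, 0 < ar g) {w : List S} {f f' : List (STerm S ar)}
    (hf : HasWord w f) (h : EWLe f f') : HasWord w f' :=
  ⟨h.isReducedF_s4 hf.1, (h.decs_eq_s4 hpos).trans hf.2⟩

theorem HasWord.length_mem_cuts {w : List S} {F : List (STerm S ar)} (hF : HasWord w F) :
    w.length ∈ cuts 0 F := by
  simpa [hF.2] using add_length_mem_cuts 0 F

theorem HasWord.le_length_of_mem_ends {w : List S} {cs r : List (STerm S ar)} {k : ℕ}
    (h : HasWord w (prune cs ++ r)) (hk : k ∈ ends 0 cs) : k ≤ w.length := by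
  have hle := mem_ends_le hk
  have hlen := congrArg List.length h.2
  simp only [forestDecs_append, forestDecs_prune, List.length_append] at hlen
  omega

theorem hasWord_fmin (w : List S) : HasWord w (fmin (ar := ar) w) := by
  induction w with
  | nil => exact hasWord_nil_iff.2 rfl
  | cons g w ih => exact hasWord_cons_iff.2 ⟨fun _ => leaf, fmin w, rfl, by simpa using ih⟩

theorem fmin_ewLe (hpos : ∀ g, 0 < ar g) {w : List S} {f : List (STerm S ar)} (hf : HasWord w f) :
    EWLe (fmin w) f := by
  induction w generalizing f with
  | nil =>
    obtain rfl := hasWord_nil_iff.1 hf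
    exact .refl
  | cons g w ih =>
    obtain ⟨c, r, rfl, hr⟩ := hasWord_cons_iff.1 hf
    refine (ewLe_node_cons_iff hpos 0).2 ⟨?_, ?_⟩
    · rw [List.ofFn_const, prune_replicate_leaf, List.nil_append]
      exact ih hr
    · rw [List.ofFn_const, ends_replicate_leaf]
      exact forall₂_replicate_left (by simp) fun k _ => k.zero_le

/-- The term `ι g₁ ∘₁ ι g₂ ∘₁ ⋯ ∘₁ ι g_ℓ`, including the case `ℓ = 0` of the leaf which `fmax`
treats apart. -/
def comb (w : List S) : STerm S ar := (w.map iotaT).foldl graftFirst leaf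

theorem foldl_graftFirst_node (g : S) (c : Fin (ar g) → STerm S ar) (l : List (STerm S ar)) :
    l.foldl graftFirst (node g c) =
      node g fun i => if (i : ℕ) = 0 then l.foldl graftFirst (c i) else c i := by
  induction l generalizing c with
  | nil => simp
  | cons t l ih =>
    rw [List.foldl_cons, graftFirst, ih]
    congr 1
    funext i
    split_ifs <;> rfl

theorem comb_cons (g : S) (w : List S) :
    comb (g :: w) = node g fun i : Fin (ar g) => if (i : ℕ) = 0 then comb w else leaf :=
  foldl_graftFirst_node g _ _

theorem fmax_eq_prune_comb (w : List S) : fmax (ar := ar) w = prune [comb w] := by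
  cases w with
  | nil => rfl
  | cons g w =>
    rw [prune_cons_of_ne (by simp [comb_cons])]
    rfl

theorem exists_fmax_cons_eq (hpos : ∀ g, 0 < ar g) (g : S) (w : List S) :
    ∃ c : Fin (ar g) → STerm S ar, fmax (g :: w) = [node g c] ∧
      List.ofFn c = comb w :: List.replicate (ar g - 1) leaf :=
  ⟨_, congrArg (fun t => [t]) (comb_cons g w), ofFn_ite_eq_zero (hpos g) _ _⟩

theorem prune_comb_cons_replicate_leaf (w : List S) (n : ℕ) :
    prune (comb (ar := ar) w :: List.replicate n leaf) = fmax w := by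
  rw [fmax_eq_prune_comb, ← List.singleton_append, prune_append, prune_replicate_leaf,
    List.append_nil]

theorem hasWord_fmax (hpos : ∀ g, 0 < ar g) (w : List S) : HasWord w (fmax (ar := ar) w) := by
  induction w with
  | nil => exact hasWord_nil_iff.2 rfl
  | cons g w ih =>
    obtain ⟨c, hmax, hc⟩ := exists_fmax_cons_eq hpos g w
    exact hasWord_cons_iff.2
      ⟨c, [], hmax, by rwa [hc, prune_comb_cons_replicate_leaf, List.append_nil]⟩

theorem degree_comb (hpos : ∀ g, 0 < ar g) (w : List S) :
    (comb (ar := ar) w).degree = w.length := by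
  have hw := (hasWord_fmax hpos w).2
  rw [fmax_eq_prune_comb, forestDecs_prune, forestDecs_cons, forestDecs_nil, List.append_nil] at hw
  rw [← length_decs, hw]

theorem ewLe_fmax (hpos : ∀ g, 0 < ar g) {w : List S} {f : List (STerm S ar)} (hf : HasWord w f) :
    EWLe f (fmax w) := by
  induction w generalizing f with
  | nil =>
    obtain rfl := hasWord_nil_iff.1 hf
    exact .refl
  | cons g w ih =>
    obtain ⟨c, r, rfl, hr⟩ := hasWord_cons_iff.1 hf
    obtain ⟨c', hmax, hc'⟩ := exists_fmax_cons_eq hpos g w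
    have hends : ends 0 (List.ofFn c') = List.replicate (ar g) w.length := by
      rw [hc', ends_cons, degree_comb hpos, zero_add, ends_replicate_leaf, ← List.replicate_succ,
        Nat.sub_add_cancel (hpos g)]
    rw [hmax]
    refine (ewLe_node_cons_iff hpos 0).2 ⟨?_, ?_⟩
    · rw [hc', prune_comb_cons_replicate_leaf, List.append_nil]
      exact ih hr
    · rw [hends]
      refine (forall₂_replicate_left (R := (· ≥ ·)) (by simp) fun _ => ?_).flip
      exact hr.le_length_of_mem_ends

theorem mem_interval_iff (hpos : ∀ g, 0 < ar g) {w : List S} {f : List (STerm S ar)} :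
    EWLe (fmin w) f ∧ EWLe f (fmax w) ↔ HasWord w f :=
  ⟨fun h => (hasWord_fmin w).of_ewLe hpos h.1, fun h => ⟨fmin_ewLe hpos h, ewLe_fmax hpos h⟩⟩

end Intervals

section Lattice

theorem exists_ends_ofFn_eq_of_isChain {n o : ℕ} {F : List (STerm S ar)} {ks : List ℕ}
    (hF : IsReducedF F) (h : (o :: ks).IsChain (WCovByIn (cuts o F))) (hks : ks.length = n) :
    ∃ (c : Fin n → STerm S ar) (r : List (STerm S ar)),
      prune (List.ofFn c) ++ r = F ∧ ends o (List.ofFn c) = ks := by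
  obtain ⟨cs, r, hcs, rfl⟩ := exists_ends_eq_of_isChain hF h
  obtain rfl : cs.length = n := by simpa using hks
  exact ⟨cs.get, r, by rwa [List.ofFn_get], by rw [List.ofFn_get]⟩

theorem exists_greatest_lowerBound (hpos : ∀ g, 0 < ar g) {w : List S}
    {f₁ f₂ : List (STerm S ar)} (h₁ : HasWord w f₁) (h₂ : HasWord w f₂) :
    ∃ m, HasWord w m ∧ EWLe m f₁ ∧ EWLe m f₂ ∧
      ∀ f, HasWord w f → EWLe f f₁ → EWLe f f₂ → EWLe f m := by
  induction w generalizing f₁ f₂ with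
  | nil =>
    obtain rfl := hasWord_nil_iff.1 h₁
    exact ⟨[], h₁, .refl, hasWord_nil_iff.1 h₂ ▸ .refl, fun _ _ h _ => h⟩
  | cons g w ih =>
    obtain ⟨c₁, r₁, rfl, hw₁⟩ := hasWord_cons_iff.1 h₁
    obtain ⟨c₂, r₂, rfl, hw₂⟩ := hasWord_cons_iff.1 h₂
    obtain ⟨F, hF, hF₁, hF₂, hF_greatest⟩ := ih hw₁ hw₂
    obtain ⟨ks, hks, hks₁, hks₂, hks_greatest⟩ := exists_inf_isChain_wCovByIn (self_mem_cuts 0 F)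
      (hF₁.cuts_subset hpos 0) (hF₂.cuts_subset hpos 0) (by simp)
      (isChain_ends 0 (List.ofFn c₁) r₁) (isChain_ends 0 (List.ofFn c₂) r₂)
    obtain ⟨c, r, rfl, rfl⟩ := exists_ends_ofFn_eq_of_isChain (n := ar g) hF.1 hks
      (by simpa using hks₁.length_eq)
    refine ⟨node g c :: r, hasWord_cons_iff.2 ⟨c, r, rfl, hF⟩,
      (ewLe_node_cons_iff hpos 0).2 ⟨hF₁, hks₁⟩, (ewLe_node_cons_iff hpos 0).2 ⟨hF₂, hks₂⟩,
      fun f hf hf₁ hf₂ => ?_⟩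
    obtain ⟨c', r', rfl, hw⟩ := hasWord_cons_iff.1 hf
    rw [ewLe_node_cons_iff hpos 0] at hf₁ hf₂ ⊢
    have hle := hF_greatest _ hw hf₁.1 hf₂.1
    exact ⟨hle, hks_greatest (hle.cuts_subset hpos 0) (isChain_ends 0 _ r') hf₁.2 hf₂.2⟩

theorem exists_least_upperBound (hpos : ∀ g, 0 < ar g) {w : List S}
    {f₁ f₂ : List (STerm S ar)} (h₁ : HasWord w f₁) (h₂ : HasWord w f₂) :
    ∃ m, HasWord w m ∧ EWLe f₁ m ∧ EWLe f₂ m ∧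
      ∀ f, HasWord w f → EWLe f₁ f → EWLe f₂ f → EWLe m f := by
  induction w generalizing f₁ f₂ with
  | nil =>
    obtain rfl := hasWord_nil_iff.1 h₁
    exact ⟨[], h₁, .refl, hasWord_nil_iff.1 h₂ ▸ .refl, fun _ _ h _ => h⟩
  | cons g w ih =>
    obtain ⟨c₁, r₁, rfl, hw₁⟩ := hasWord_cons_iff.1 h₁
    obtain ⟨c₂, r₂, rfl, hw₂⟩ := hasWord_cons_iff.1 h₂
    obtain ⟨F, hF, hF₁, hF₂, hF_least⟩ := ih hw₁ hw₂
    obtain ⟨ks, hks, hks₁, hks₂, hks_least⟩ := exists_sup_isChain_wCovByIn (self_mem_cuts 0 F)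
      hF.length_mem_cuts (hF₁.cuts_subset hpos 0) (hF₂.cuts_subset hpos 0) (by simp)
      (isChain_ends 0 (List.ofFn c₁) r₁) (isChain_ends 0 (List.ofFn c₂) r₂)
      (fun _ => hw₁.le_length_of_mem_ends) (fun _ => hw₂.le_length_of_mem_ends)
    obtain ⟨c, r, rfl, rfl⟩ := exists_ends_ofFn_eq_of_isChain (n := ar g) hF.1 hks
      (by simpa using hks₁.length_eq.symm)
    refine ⟨node g c :: r, hasWord_cons_iff.2 ⟨c, r, rfl, hF⟩,
      (ewLe_node_cons_iff hpos 0).2 ⟨hF₁, hks₁⟩, (ewLe_node_cons_iff hpos 0).2 ⟨hF₂, hks₂⟩,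
      fun f hf hf₁ hf₂ => ?_⟩
    obtain ⟨c', r', rfl, hw⟩ := hasWord_cons_iff.1 hf
    rw [ewLe_node_cons_iff hpos 0] at hf₁ hf₂ ⊢
    have hle := hF_least _ hw hf₁.1 hf₂.1
    exact ⟨hle, hks_least (hle.cuts_subset hpos 0) (isChain_ends 0 _ r') hf₁.2 hf₂.2⟩

end Lattice

end EasterlyWind

/-- for any word `w` on a positive signature, `f_min(w) ≼ f_max(w)`, and the
interval `W(w) = [f_min(w), f_max(w)]` of the easterly wind order is a lattice. -/
theorem easterly_wind_interval_lattice {S : Type} {ar : S → ℕ} (hpos : ∀ g : S, 0 < ar g)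
    (w : List S) :
    EWLe (fmin (ar := ar) w) (fmax w) ∧
    ∀ f₁ f₂ : List (STerm S ar),
      (EWLe (fmin w) f₁ ∧ EWLe f₁ (fmax w)) →
      (EWLe (fmin w) f₂ ∧ EWLe f₂ (fmax w)) →
      (∃ m : List (STerm S ar), (EWLe (fmin w) m ∧ EWLe m (fmax w)) ∧
          EWLe m f₁ ∧ EWLe m f₂ ∧
          ∀ g : List (STerm S ar), (EWLe (fmin w) g ∧ EWLe g (fmax w)) →
            EWLe g f₁ → EWLe g f₂ → EWLe g m) ∧
      (∃ j : List (STerm S ar), (EWLe (fmin w) j ∧ EWLe j (fmax w)) ∧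
          EWLe f₁ j ∧ EWLe f₂ j ∧
          ∀ g : List (STerm S ar), (EWLe (fmin w) g ∧ EWLe g (fmax w)) →
            EWLe f₁ g → EWLe f₂ g → EWLe j g) := by
  simp only [EasterlyWind.mem_interval_iff hpos]
  exact ⟨EasterlyWind.fmin_ewLe hpos (EasterlyWind.hasWord_fmax hpos w), fun f₁ f₂ h₁ h₂ =>
    ⟨EasterlyWind.exists_greatest_lowerBound hpos h₁ h₂,
      EasterlyWind.exists_least_upperBound hpos h₁ h₂⟩⟩
end

section
/- Let S be a positive signature. For any reduced S-forests f' and f'', the over product is less than or equal to the under product in the easterly wind order: f' ▽ f'' ≼ f' △ f''. -/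
open scoped BigOperators

/-! Write the over product as `pre ++ t :: f''`, with `t` the last tree of `f'`. The trees of `f''`
are moved onto `t` one at a time. A root move grafts the next tree on the last leaf of `t`; term
moves then slide it from each extremal leaf to the previous one until it reaches its destination.
Each slide is a single move: on the way from the root to an extremal leaf, every right sibling is a
leaf, so at the node where the paths to two consecutive extremal leaves part, the first leaf is the
last one of some child and the second leaf is the sibling immediately to the right of that child.

A term with an extremal leaf has its last leaf at the end of its rightmost branch, and this leaf is
extremal: the slide can start there.
-/

open Finset Function Relation

section PartialSums

lemma sum_Iio_add_le_sum_Iio {ι M : Type*} [PartialOrder ι] [LocallyFiniteOrderBot ι]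
    [AddCommMonoid M] [PartialOrder M] [CanonicallyOrderedAdd M] (a : ι → M) {i j : ι} (h : i < j) :
    ∑ k < i, a k + a i ≤ ∑ k < j, a k := by
  rw [sum_Iio_add_eq_sum_Iic]
  exact sum_le_sum_of_subset fun _ hk => mem_Iio.2 ((mem_Iic.1 hk).trans_lt h)

lemma sum_Iio_add_le_sum {ι M : Type*} [PartialOrder ι] [LocallyFiniteOrderBot ι] [Fintype ι]
    [AddCommMonoid M] [PartialOrder M] [CanonicallyOrderedAdd M] (a : ι → M) (i : ι) :
    ∑ k < i, a k + a i ≤ ∑ k, a k := by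
  rw [sum_Iio_add_eq_sum_Iic]
  exact sum_le_sum_of_subset (subset_univ _)

lemma sum_Iio_add_eq_sum_Iio {n : ℕ} {M : Type*} [AddCommMonoid M] (a : Fin n → M) {i j : Fin n}
    (h : (j : ℕ) = i + 1) : ∑ k < i, a k + a i = ∑ k < j, a k := by
  rw [sum_Iio_add_eq_sum_Iic]
  congr 1
  ext k
  simp only [mem_Iic, mem_Iio, Fin.le_def, Fin.lt_def]
  lia

lemma sum_Iio_add_eq_sum {n : ℕ} {M : Type*} [AddCommMonoid M] (a : Fin n → M) {i : Fin n}
    (h : (i : ℕ) + 1 = n) : ∑ k < i, a k + a i = ∑ k, a k := by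
  rw [sum_Iio_add_eq_sum_Iic]
  congr 1
  ext k
  simp only [mem_Iic, mem_univ, Fin.le_def]
  lia

lemma exists_sum_Iio_add_eq {n : ℕ} (a : Fin n → ℕ) {p : ℕ} (hp : p < ∑ i, a i) :
    ∃ i, ∃ q < a i, ∑ k < i, a k + q = p := by
  induction n with
  | zero => simp at hp
  | succ n ih =>
    rw [Fin.sum_univ_castSucc] at hp
    by_cases h : p < ∑ i : Fin n, a i.castSucc
    · obtain ⟨i, q, hq, rfl⟩ := ih (fun i => a i.castSucc) h
      exact ⟨i.castSucc, q, hq, by rw [Fin.sum_Iio_castSucc]⟩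
    · refine ⟨Fin.last n, p - ∑ i : Fin n, a i.castSucc, by lia, ?_⟩
      rw [Fin.Iio_last_eq_map, sum_map]
      simp only [Fin.coe_castSuccEmb]
      lia

end PartialSums

section Lists

variable {α : Type*} (P : α → Bool)

lemma length_takeWhile_le_countP (l : List α) : (l.takeWhile P).length ≤ l.countP P :=
  (List.countP_eq_length.2 fun _ => List.mem_takeWhile_imp).symm.trans_le
    (List.takeWhile_sublist P).countP_le

variable {P} in
lemma takeWhile_append_cons_of_neg (l l' : List α) {x : α} (hx : ¬ P x) :
    (l ++ x :: l').takeWhile P = l.takeWhile P := by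
  rw [List.takeWhile_append, List.takeWhile_cons_of_neg hx, List.append_nil, ite_eq_right_iff]
  exact fun h => ((List.takeWhile_prefix P).eq_of_length h).symm

lemma exists_flatten_ofFn_eq_append {n : ℕ} (f : Fin n → List α) (i : Fin n) :
    ∃ u v, (List.ofFn f).flatten = u ++ (f i ++ v) ∧
      u.countP P = ∑ k < i, (f k).countP P := by
  have hi : (i : ℕ) < (List.ofFn f).length := by simp
  refine ⟨((List.ofFn f).take i).flatten, ((List.ofFn f).drop (i + 1)).flatten, ?_, ?_⟩
  · conv_lhs => rw [← List.take_append_drop i (List.ofFn f), List.drop_eq_getElem_cons hi]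
    simp
  · rw [List.countP_flatten, List.map_take, List.map_ofFn, List.sum_take_ofFn]
    congr 1
    ext k
    simp

end Lists

namespace STerm

variable {S : Type} {ar : S → ℕ}

/-- Grafting along a family: the `p`-th leaf (counted from `0`) of `t` is replaced by `φ p`. Unlike
for `STerm.graftList`, the families grafted on the children of a node are shifts of `φ`, so that
changing a single grafted term is a `Function.update`. -/
def graft : STerm S ar → (ℕ → STerm S ar) → STerm S ar
  | leaf, φ => φ 0
  | node _ c, φ => node _ fun i => (c i).graft fun q => φ (∑ k < i, (c k).arity + q)

lemma graft_congr {t : STerm S ar} {φ ψ : ℕ → STerm S ar} (h : ∀ p < t.arity, φ p = ψ p) :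
    t.graft φ = t.graft ψ := by
  induction t generalizing φ ψ with
  | leaf => exact h 0 Nat.one_pos
  | node g c ih =>
    simp only [graft, node.injEq, heq_eq_eq, true_and]
    refine funext fun i => ih i fun q hq => h _ ?_
    have hle := sum_Iio_add_le_sum (fun k => (c k).arity) i
    simp only [arity]
    lia

lemma graft_const_leaf (t : STerm S ar) : (t.graft fun _ => leaf) = t := by
  induction t with
  | leaf => rfl
  | node g c ih => simp only [graft, ih]

lemma graftList_eq_graft (t : STerm S ar) (l : List (STerm S ar)) :
    t.graftList l = t.graft fun p => l.getD p leaf := by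
  induction t generalizing l with
  | leaf => cases l <;> rfl
  | node g c ih =>
    simp only [graftList, graft, ih, node.injEq, heq_eq_eq, true_and]
    refine funext fun i => graft_congr fun q hq => ?_
    have hoff : (∑ k : Fin (ar g), if (k : ℕ) < (i : ℕ) then (c k).arity else 0) =
        ∑ k < i, (c k).arity := by
      rw [← sum_filter]
      congr 1
      ext k
      simp
    simp only [List.getD_eq_getElem?_getD, List.getElem?_take, List.getElem?_drop, hq, if_true,
      hoff]

lemma graft_node_update (g : S) (c : Fin (ar g) → STerm S ar) (φ : ℕ → STerm S ar) (i : Fin (ar g))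
    {q : ℕ} (hq : q < (c i).arity) (s : STerm S ar) :
    (node g c).graft (update φ (∑ k < i, (c k).arity + q) s) =
      node g (update (fun j => (c j).graft fun r => φ (∑ k < j, (c k).arity + r)) i
        ((c i).graft (update (fun r => φ (∑ k < i, (c k).arity + r)) q s))) := by
  simp only [graft, node.injEq, heq_eq_eq, true_and]
  funext j
  rcases eq_or_ne j i with rfl | hne
  · rw [update_self]
    refine graft_congr fun r _ => ?_
    simp only [update_apply, Nat.add_left_cancel_iff]
  · rw [update_of_ne hne]
    refine graft_congr fun r hr => update_of_ne ?_ _ _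
    rcases hne.lt_or_gt with h | h <;>
      have := sum_Iio_add_le_sum_Iio (fun k => (c k).arity) h <;> lia

lemma graftRight_node (g : S) (c : Fin (ar g) → STerm S ar) {i : Fin (ar g)}
    (hi : (i : ℕ) + 1 = ar g) (s : STerm S ar) :
    (node g c).graftRight s = node g (update c i ((c i).graftRight s)) := by
  simp only [graftRight, node.injEq, heq_eq_eq, true_and]
  funext j
  rcases eq_or_ne j i with rfl | hne
  · rw [if_pos (by lia), update_self]
  · rw [if_neg (by lia), update_of_ne hne]

section Extremal

/-- `t.IsExtremal p` says that the `p`-th leaf (counted from `0`) of `t` is extremal. Instead of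
comparing positions in the preorder traversal, it follows the path from the root to this leaf: all
the right siblings of its nodes are leaves. -/
inductive IsExtremal : STerm S ar → ℕ → Prop
  | leaf : IsExtremal leaf 0
  | node (g : S) (c : Fin (ar g) → STerm S ar) (i : Fin (ar g)) (q : ℕ) :
      IsExtremal (c i) q → (∀ j, i < j → c j = .leaf) →
      IsExtremal (node g c) (∑ k < i, (c k).arity + q)

lemma countP_isNone_preo (t : STerm S ar) : t.preo.countP (·.isNone) = t.arity := by
  induction t with
  | leaf => rfl
  | node g c ih =>
    simp [preo, arity, List.countP_flatten, List.map_ofFn, List.sum_ofFn, ih]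

lemma exists_preo_node_eq_append (g : S) (c : Fin (ar g) → STerm S ar) (i : Fin (ar g)) :
    ∃ u v, (node g c).preo = some g :: u ++ ((c i).preo ++ v) ∧
      (some g :: u).countP (·.isNone) = ∑ k < i, (c k).arity := by
  obtain ⟨u, v, heq, hcount⟩ := exists_flatten_ofFn_eq_append (·.isNone) (fun k => (c k).preo) i
  refine ⟨u, v, by rw [preo, heq, List.cons_append], ?_⟩
  simpa [countP_isNone_preo] using hcount

lemma isExtremal_of_preo {t : STerm S ar} {p : ℕ} (hp : p < t.arity)
    (h : ∀ u g v, t.preo = u ++ some g :: v → u.countP (·.isNone) ≤ p) : t.IsExtremal p := by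
  induction t generalizing p with
  | leaf =>
    obtain rfl : p = 0 := Nat.lt_one_iff.1 hp
    exact .leaf
  | node g c ih =>
    obtain ⟨i, q, hq, rfl⟩ := exists_sum_Iio_add_eq (fun k => (c k).arity) hp
    refine .node g c i q (ih i hq fun u g' v heq => ?_) fun j hij => ?_
    · obtain ⟨u', v', hpreo, hcount⟩ := exists_preo_node_eq_append g c i
      have := h (some g :: u' ++ u) g' (v ++ v') (by simp [hpreo, heq])
      rw [List.countP_append, hcount] at this
      lia
    · cases hj : c j with
      | leaf => rfl
      | node g' c' =>
        obtain ⟨u', v', hpreo, hcount⟩ := exists_preo_node_eq_append g c j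
        have := h (some g :: u') g' _ (by rw [hpreo, hj, preo, List.cons_append (a := some g')])
        have := sum_Iio_add_le_sum_Iio (fun k => (c k).arity) hij
        lia

lemma extremalCount_le_arity (t : STerm S ar) : t.extremalCount ≤ t.arity := by
  rw [← countP_isNone_preo, ← List.countP_reverse]
  exact length_takeWhile_le_countP _ _

lemma isExtremal_of_arity_sub_extremalCount_le {t : STerm S ar} {p : ℕ}
    (hle : t.arity - t.extremalCount ≤ p) (hp : p < t.arity) : t.IsExtremal p := by
  refine isExtremal_of_preo hp fun u g v heq => ?_
  have hext : t.extremalCount ≤ v.countP (·.isNone) := by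
    rw [extremalCount, heq, List.reverse_append, List.reverse_cons, List.append_assoc,
      List.singleton_append, takeWhile_append_cons_of_neg _ _ (by simp), ← List.countP_reverse]
    exact length_takeWhile_le_countP _ _
  have harity : u.countP (·.isNone) + v.countP (·.isNone) = t.arity := by
    simp [← countP_isNone_preo, heq]
  lia

lemma IsExtremal.lt_arity {t : STerm S ar} {p : ℕ} (h : t.IsExtremal p) : p < t.arity := by
  induction h with
  | leaf => exact Nat.one_pos
  | node g c i q _ _ ih =>
    have hle := sum_Iio_add_le_sum (fun k => (c k).arity) i
    simp only [arity]
    lia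

end Extremal

section Moves

lemma TermMove.node_update (g : S) (C : Fin (ar g) → STerm S ar) (i : Fin (ar g))
    {t t' : STerm S ar} (h : TermMove t t') :
    TermMove (node g (update C i t)) (node g (update C i t')) := by
  have hmove := TermMove.child g (update C i t) i t' (by rwa [update_self])
  rwa [update_idem] at hmove

lemma TermMove.node_graftRight (g : S) {C : Fin (ar g) → STerm S ar} {i j : Fin (ar g)}
    (hj : (j : ℕ) = i + 1) (hC : C j = leaf) {s : STerm S ar} (hs : s ≠ leaf) :
    TermMove (node g (update C j s)) (node g (update C i ((C i).graftRight s))) := by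
  have hij : i ≠ j := by lia
  have hmove := TermMove.here g (update C j s) i j hj (by rwa [update_self])
  rwa [update_self, update_of_ne hij, update_comm hij, update_idem, ← hC, update_eq_self] at hmove

lemma graftRight_graft_of_isExtremal {t : STerm S ar} {p : ℕ} (h : t.IsExtremal p)
    (hp : p + 1 = t.arity) {φ : ℕ → STerm S ar} (hφ : φ p = leaf) (s : STerm S ar) :
    (t.graft φ).graftRight s = t.graft (update φ p s) := by
  induction h generalizing φ with
  | leaf => simp only [graft, hφ, graftRight, update_self]
  | node g c i q hq hright ih =>
    have hlt := hq.lt_arity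
    have hi : (i : ℕ) + 1 = ar g := by
      by_contra hne
      let j : Fin (ar g) := ⟨i + 1, by lia⟩
      have hij : i < j := Nat.lt_succ_self i
      have hle := sum_Iio_add_le_sum (fun k => (c k).arity) j
      have := sum_Iio_add_le_sum_Iio (fun k => (c k).arity) hij
      rw [hright j hij] at hle
      simp only [arity] at hp hle
      lia
    have hsum := sum_Iio_add_eq_sum (fun k => (c k).arity) hi
    simp only [arity] at hp
    rw [graft_node_update _ _ _ _ hlt, graft, graftRight_node g _ hi, ih (by lia) hφ]

lemma termMove_graft_update_of_isExtremal {t : STerm S ar} {p : ℕ} (h : t.IsExtremal p)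
    (hp : p + 1 < t.arity) {φ : ℕ → STerm S ar} (hφ : φ p = leaf) (hφ' : φ (p + 1) = leaf)
    {s : STerm S ar} (hs : s ≠ leaf) :
    TermMove (t.graft (update φ (p + 1) s)) (t.graft (update φ p s)) := by
  induction h generalizing φ with
  | leaf => simp [arity] at hp
  | node g c i q hq hright ih =>
    have hlt := hq.lt_arity
    rw [graft_node_update _ _ _ _ hlt]
    rcases Nat.lt_or_ge (q + 1) (c i).arity with hq' | hq'
    · rw [add_assoc] at hφ' ⊢
      rw [graft_node_update _ _ _ _ hq']
      exact (ih hq' hφ hφ').node_update g _ i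
    · have hi : (i : ℕ) + 1 < ar g := by
        by_contra hge
        have := sum_Iio_add_eq_sum (fun k => (c k).arity) (i := i) (by lia)
        simp only [arity] at hp
        lia
      obtain ⟨j, hj⟩ : ∃ j : Fin (ar g), (j : ℕ) = i + 1 := ⟨⟨i + 1, hi⟩, rfl⟩
      have hcj : c j = leaf := hright j (by lia)
      have hoff : ∑ k < i, (c k).arity + q + 1 = ∑ k < j, (c k).arity + 0 := by
        have := sum_Iio_add_eq_sum_Iio (fun k => (c k).arity) hj
        lia
      rw [hoff] at hφ' ⊢
      rw [graft_node_update _ _ _ _ (by rw [hcj]; exact Nat.one_pos),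
        ← graftRight_graft_of_isExtremal hq (by lia) hφ, hcj, graft, update_self]
      exact TermMove.node_graftRight g hj (by rw [hcj, graft, hφ']) hs

lemma reflTransGen_termMove_graft_update {t : STerm S ar} {p q : ℕ} (hpq : p ≤ q)
    (hext : ∀ r, p ≤ r → r < t.arity → t.IsExtremal r) (hq : q < t.arity) {φ : ℕ → STerm S ar}
    (hφ : ∀ r, p ≤ r → φ r = leaf) {s : STerm S ar} (hs : s ≠ leaf) :
    ReflTransGen TermMove (t.graft (update φ q s)) (t.graft (update φ p s)) := by
  induction q, hpq using Nat.le_induction with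
  | base => exact .refl
  | succ q hpq ih =>
    have hmove := termMove_graft_update_of_isExtremal (hext q hpq (by lia)) hq (hφ q hpq)
      (hφ (q + 1) (by lia)) hs
    exact (ih (by lia)).head hmove

end Moves

end STerm

section Under

open STerm

variable {S : Type} {ar : S → ℕ}

/-- The family `φ` whose values at `p`, `p + 1`, … are replaced by the entries of `l`, and by leaves
once `l` is exhausted. -/
def fillFrom (φ : ℕ → STerm S ar) (p : ℕ) (l : List (STerm S ar)) (r : ℕ) : STerm S ar :=
  if r < p then φ r else l.getD (r - p) leaf

lemma fillFrom_nil {φ : ℕ → STerm S ar} {p : ℕ} (hφ : ∀ r, p ≤ r → φ r = leaf) :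
    fillFrom φ p [] = φ := by
  funext r
  rcases Nat.lt_or_ge r p with hr | hr
  · exact if_pos hr
  · simp [fillFrom, hr.not_gt, hφ r hr]

lemma fillFrom_cons (φ : ℕ → STerm S ar) (p : ℕ) (s : STerm S ar) (l : List (STerm S ar)) :
    fillFrom φ p (s :: l) = fillFrom (update φ p s) (p + 1) l := by
  funext r
  rcases lt_trichotomy r p with hr | rfl | hr
  · simp [fillFrom, hr, hr.ne, Nat.lt_succ_of_lt hr]
  · simp [fillFrom]
  · obtain ⟨d, rfl⟩ := Nat.exists_eq_add_of_lt hr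
    rw [fillFrom, fillFrom, if_neg (by lia), if_neg (by lia), show p + d + 1 - p = d + 1 by lia,
      show p + d + 1 - (p + 1) = d by lia, List.getD_cons_succ]

lemma underSub_eq_graft (t : STerm S ar) (l : List (STerm S ar)) :
    underSub t l = t.graft (fillFrom (fun _ => leaf) (t.arity - t.extremalCount) l) := by
  rw [underSub, graftList_eq_graft]
  refine graft_congr fun p hp => ?_
  rw [List.getD_eq_getElem _ _ (by simpa using hp), List.getElem_ofFn, fillFrom]

lemma EWLe.of_reflTransGen_termMove (pre post : List (STerm S ar)) {t t' : STerm S ar}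
    (h : ReflTransGen TermMove t t') : EWLe (pre ++ t :: post) (pre ++ t' :: post) :=
  h.lift (fun t => pre ++ t :: post) fun _ _ => ForestMove.tree pre _ _ post

lemma ewLe_graft_update (pre post : List (STerm S ar)) {t s : STerm S ar} (hs : s ≠ leaf) {p : ℕ}
    (hp : p < t.arity) (hext : ∀ r, p ≤ r → r < t.arity → t.IsExtremal r)
    {φ : ℕ → STerm S ar} (hφ : ∀ r, p ≤ r → φ r = leaf) :
    EWLe (pre ++ t.graft φ :: s :: post) (pre ++ t.graft (update φ p s) :: post) := by
  obtain ⟨q, hq⟩ := Nat.exists_eq_add_one.2 (Nat.zero_lt_of_lt hp)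
  have hroot := ForestMove.root pre (t.graft φ) s post hs
  rw [graftRight_graft_of_isExtremal (hext q (by lia) (by lia)) hq.symm (hφ q (by lia))] at hroot
  have hslide := reflTransGen_termMove_graft_update (q := q) (by lia) hext (by lia) hφ hs
  exact .head hroot (EWLe.of_reflTransGen_termMove pre post hslide)

lemma ewLe_graft_fillFrom (pre : List (STerm S ar)) {t : STerm S ar} {f : List (STerm S ar)}
    (hf : IsReducedF f) {p : ℕ} (hext : ∀ r, p ≤ r → r < t.arity → t.IsExtremal r)
    {φ : ℕ → STerm S ar} (hφ : ∀ r, p ≤ r → φ r = leaf) :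
    EWLe (pre ++ t.graft φ :: f)
      (pre ++ t.graft (fillFrom φ p (f.take (t.arity - p))) :: f.drop (t.arity - p)) := by
  induction f generalizing p φ with
  | nil =>
    rw [List.take_nil, List.drop_nil, fillFrom_nil hφ]
    exact .refl
  | cons s f ih =>
    rcases Nat.lt_or_ge p t.arity with hp | hp
    · rw [show t.arity - p = t.arity - (p + 1) + 1 by lia, List.take_succ_cons,
        List.drop_succ_cons, fillFrom_cons]
      have hφ' : ∀ r, p + 1 ≤ r → update φ p s r = leaf := fun r hr => by
        rw [update_of_ne (by lia), hφ r (by lia)]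
      exact (ewLe_graft_update pre f (hf s List.mem_cons_self) hp hext hφ).trans <|
        ih (fun t ht => hf t (List.mem_cons_of_mem s ht)) (fun r hr => hext r (by lia)) hφ'
    · rw [Nat.sub_eq_zero_of_le hp, List.take_zero, List.drop_zero, fillFrom_nil hφ]
      exact .refl

theorem over_le_under_general (f' f'' : List (STerm S ar)) (h'' : IsReducedF f'') :
    EWLe (f' ++ f'') (underP f' f'') := by
  rcases List.eq_nil_or_concat f' with rfl | ⟨pre, t, rfl⟩
  · exact .refl
  · have hfill := ewLe_graft_fillFrom pre h'' (t := t) (p := t.arity - t.extremalCount)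
      (φ := fun _ => leaf) (fun r => isExtremal_of_arity_sub_extremalCount_le) fun _ _ => rfl
    rw [Nat.sub_sub_self t.extremalCount_le_arity, ← underSub_eq_graft, graft_const_leaf] at hfill
    simpa [underP] using hfill

end Under

/-- for reduced forests `f'` and `f''`, the over product (concatenation) is
smaller than or equal to the under product in the easterly wind order. -/
theorem over_le_under {S : Type} {ar : S → ℕ} (hpos : ∀ g : S, 0 < ar g)
    (f' f'' : List (STerm S ar)) (h' : IsReducedF f') (h'' : IsReducedF f'') :
    EWLe (f' ++ f'') (underP f' f'') :=
  over_le_under_general f' f'' h''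
end
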